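/- arXiv:1203.0676 — 2 statements merged into one kernel-verified Lean document; each statement's English description precedes it below -/
import Mathlib

section
/- Let Ψ ∈ C²(ℝ^d) be convex, bounded from below, with ΔΨ bounded, and suppose there is a constant C > 0 such that |x| |∇Ψ(x)| ≤ C(1 + |x|²) for all x ∈ ℝ^d. Let (ρ_t)_{t∈[0,1]} be a narrowly continuous family of Borel probability measures on ℝ^d with ∫ Ψ dρ_0 < ∞, and suppose there is a finite constant J such that for every p ∈ C_c^∞(ℝ^d) and every s ∈ [0,1]: ∫ p dρ_s − ∫ p dρ_0 − ∫_0^s ∫ Δp dρ_t dt + ∫_0^s ∫ ∇Ψ · ∇p dρ_t dt − (1/2) ∫_0^s ∫ |∇p|² dρ_t dt ≤ J. Then for every δ ∈ (0,1] with α := 1/e − 5δC > 0, setting β := 3/(4e) − 1/4 > 0, one has α · sup_{t∈[0,δ]} ∫ |Ψ| dρ_t + β · ∫_0^δ ∫ |∇Ψ|² dρ_t dt ≤ 2J + (8/e) |inf Ψ| + (2/e) ∫ Ψ dρ_0 + 2δ + (2δ/e) ‖ΔΨ‖_∞. -/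
open MeasureTheory
open scoped RealInnerProductSpace

/-- The Laplacian of `f : ℝ^d → ℝ`, as the sum of the pure second derivatives. -/
noncomputable def lapl {d : ℕ} (f : EuclideanSpace ℝ (Fin d) → ℝ)
    (x : EuclideanSpace ℝ (Fin d)) : ℝ :=
  ∑ i : Fin d, fderiv ℝ (fun y => fderiv ℝ f y (EuclideanSpace.single i 1)) x
    (EuclideanSpace.single i 1)

/-! Set `V = Ψ - inf Ψ ≥ 0` and test the action bound with `p = χₙ · T_ε(V)`, where `χₙ` is a
smooth cutoff at scale `n` and `T_ε(r) = (1 - e^{-εr}) / ε` is concave and bounded on `[0, ∞)`,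
with `0 ≤ T_ε' ≤ 1`. Up to errors carrying derivatives of `χₙ`, the Hamiltonian `Δp - ∇V · ∇p +
|∇p|² / 2` is then at most `‖ΔΨ‖_∞ - χₙ T_ε'(V) |∇V|² / 2`: concavity makes the second-order term
favourable, and `T_ε' ≤ 1` lets the drift term absorb the quadratic one at the cost of half of the
dissipation. The errors vanish as `n → ∞`, since `|∇V|` grows at most linearly while `|∇χₙ|` is of
order `1 / n` and supported where `|x|` is of order `n`. Fatou's lemma as `ε → 0` bounds `∫ V
dρ_s` by `B = ∫ V dρ_0 + J + δ ‖ΔΨ‖_∞` and `∫_0^δ ∫ |∇V|² dρ_t dt` by `2B`; these two bounds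
already imply the one with the stated constants. Test functions of class `C²_c` are reached from
`C_c^∞` by mollification. -/

open Filter Topology

section NarrowCurve

variable {X : Type*} [TopologicalSpace X] [MeasurableSpace X]

/-- Narrowly continuous curves of Borel probability measures, parametrised by `I ⊆ ℝ`; the values
of `ρ` outside `I` are irrelevant. -/
structure IsNarrowCurve (ρ : ℝ → Measure X) (I : Set ℝ) : Prop where
  isProbabilityMeasure : ∀ t ∈ I, IsProbabilityMeasure (ρ t)
  continuousOn_integral : ∀ φ : BoundedContinuousFunction X ℝ,
    ContinuousOn (fun t => ∫ x, φ x ∂(ρ t)) I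

theorem lintegral_le_of_le_liminf {α : Type*} [MeasurableSpace α] {μ : Measure α}
    {f : ℕ → α → ENNReal} {g : α → ENNReal} {c : ENNReal} (hf : ∀ n, AEMeasurable (f n) μ)
    (hg : ∀ᵐ x ∂μ, g x ≤ liminf (fun n => f n x) atTop) (hc : ∀ n, ∫⁻ x, f n x ∂μ ≤ c) :
    ∫⁻ x, g x ∂μ ≤ c :=
  calc ∫⁻ x, g x ∂μ ≤ ∫⁻ x, liminf (fun n => f n x) atTop ∂μ := lintegral_mono_ae hg
    _ ≤ liminf (fun n => ∫⁻ x, f n x ∂μ) atTop := lintegral_liminf_le' hf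
    _ ≤ c := liminf_le_of_frequently_le' (Frequently.of_forall hc)

theorem lintegral_ofReal_le_of_tendsto {α : Type*} [MeasurableSpace α] {μ : Measure α}
    {f : ℕ → α → ℝ} {g : α → ℝ} {c : ℝ} (hf : ∀ n, Integrable (f n) μ) (hf0 : ∀ n x, 0 ≤ f n x)
    (hlim : ∀ x, Tendsto (fun n => f n x) atTop (𝓝 (g x))) (hc : ∀ n, ∫ x, f n x ∂μ ≤ c) :
    ∫⁻ x, ENNReal.ofReal (g x) ∂μ ≤ ENNReal.ofReal c := by
  refine lintegral_le_of_le_liminf (fun n => (hf n).aemeasurable.ennreal_ofReal)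
    (.of_forall fun x => (ENNReal.tendsto_ofReal (hlim x)).liminf_eq.ge) fun n => ?_
  rw [← ofReal_integral_eq_lintegral_ofReal (hf n) (.of_forall (hf0 n))]
  exact ENNReal.ofReal_le_ofReal (hc n)

namespace IsNarrowCurve

variable {ρ : ℝ → Measure X} {I : Set ℝ} {a b : ℝ}

theorem mono {I' : Set ℝ} (hρ : IsNarrowCurve ρ I) (h : I' ⊆ I) : IsNarrowCurve ρ I' where
  isProbabilityMeasure t ht := hρ.isProbabilityMeasure t (h ht)
  continuousOn_integral φ := (hρ.continuousOn_integral φ).mono h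

theorem continuousOn_integral_of_bounded (hρ : IsNarrowCurve ρ I) {f : X → ℝ} (hf : Continuous f)
    (hfb : ∃ M, ∀ x, ‖f x‖ ≤ M) : ContinuousOn (fun t => ∫ x, f x ∂(ρ t)) I :=
  let ⟨M, hM⟩ := hfb
  hρ.continuousOn_integral (.ofNormedAddCommGroup f hf M hM)

theorem intervalIntegrable_integral (hρ : IsNarrowCurve ρ (Set.Icc a b)) (hab : a ≤ b)
    {f : X → ℝ} (hf : Continuous f) (hfb : ∃ M, ∀ x, ‖f x‖ ≤ M) :
    IntervalIntegrable (fun t => ∫ x, f x ∂(ρ t)) volume a b :=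
  (hρ.continuousOn_integral_of_bounded hf hfb).intervalIntegrable_of_Icc hab

theorem integral_integral_const (hρ : IsNarrowCurve ρ (Set.Icc a b)) (hab : a ≤ b) (c : ℝ) :
    ∫ t in a..b, ∫ _, c ∂(ρ t) = (b - a) * c := by
  rw [intervalIntegral.integral_congr (g := fun _ => c), intervalIntegral.integral_const,
    smul_eq_mul]
  intro t ht
  rw [Set.uIcc_of_le hab] at ht
  have := hρ.isProbabilityMeasure t ht
  simp

variable [OpensMeasurableSpace X]

theorem integrable (hρ : IsNarrowCurve ρ I) {f : X → ℝ} (hf : Continuous f)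
    (hfb : ∃ M, ∀ x, ‖f x‖ ≤ M) {t : ℝ} (ht : t ∈ I) : Integrable f (ρ t) := by
  have := hρ.isProbabilityMeasure t ht
  obtain ⟨M, hM⟩ := hfb
  exact .of_bound hf.aestronglyMeasurable M (.of_forall hM)

theorem integral_integral_sub (hρ : IsNarrowCurve ρ (Set.Icc a b)) (hab : a ≤ b) {f g : X → ℝ}
    (hf : Continuous f) (hfb : ∃ M, ∀ x, ‖f x‖ ≤ M) (hg : Continuous g)
    (hgb : ∃ M, ∀ x, ‖g x‖ ≤ M) :
    ∫ t in a..b, ∫ x, (f x - g x) ∂(ρ t) =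
      (∫ t in a..b, ∫ x, f x ∂(ρ t)) - ∫ t in a..b, ∫ x, g x ∂(ρ t) := by
  rw [← intervalIntegral.integral_sub (hρ.intervalIntegrable_integral hab hf hfb)
    (hρ.intervalIntegrable_integral hab hg hgb)]
  refine intervalIntegral.integral_congr fun t ht => ?_
  rw [Set.uIcc_of_le hab] at ht
  exact integral_sub (hρ.integrable hf hfb ht) (hρ.integrable hg hgb ht)

theorem integral_integral_mono (hρ : IsNarrowCurve ρ (Set.Icc a b)) (hab : a ≤ b) {f g : X → ℝ}
    (hf : Continuous f) (hfb : ∃ M, ∀ x, ‖f x‖ ≤ M) (hg : Continuous g)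
    (hgb : ∃ M, ∀ x, ‖g x‖ ≤ M) (hfg : ∀ x, f x ≤ g x) :
    ∫ t in a..b, ∫ x, f x ∂(ρ t) ≤ ∫ t in a..b, ∫ x, g x ∂(ρ t) :=
  intervalIntegral.integral_mono_on hab (hρ.intervalIntegrable_integral hab hf hfb)
    (hρ.intervalIntegrable_integral hab hg hgb) fun _ ht =>
      integral_mono (hρ.integrable hf hfb ht) (hρ.integrable hg hgb ht) hfg

section Limits

variable {f : ℕ → X → ℝ} {g : X → ℝ} {M : ℝ}

theorem tendsto_integral (hρ : IsNarrowCurve ρ I) (hf : ∀ n, Continuous (f n))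
    (hM : ∀ n x, ‖f n x‖ ≤ M) (hlim : ∀ x, Tendsto (fun n => f n x) atTop (𝓝 (g x)))
    {t : ℝ} (ht : t ∈ I) :
    Tendsto (fun n => ∫ x, f n x ∂(ρ t)) atTop (𝓝 (∫ x, g x ∂(ρ t))) := by
  have := hρ.isProbabilityMeasure t ht
  exact tendsto_integral_of_dominated_convergence (fun _ => M)
    (fun n => (hf n).aestronglyMeasurable) (integrable_const _)
    (fun n => .of_forall (hM n)) (.of_forall hlim)

theorem tendsto_integral_integral (hρ : IsNarrowCurve ρ (Set.Icc a b)) (hab : a ≤ b)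
    (hf : ∀ n, Continuous (f n)) (hM : ∀ n x, ‖f n x‖ ≤ M)
    (hlim : ∀ x, Tendsto (fun n => f n x) atTop (𝓝 (g x))) :
    Tendsto (fun n => ∫ t in a..b, ∫ x, f n x ∂(ρ t)) atTop
      (𝓝 (∫ t in a..b, ∫ x, g x ∂(ρ t))) := by
  have hsub : Set.uIoc a b ⊆ Set.Icc a b := Set.uIoc_of_le hab ▸ Set.Ioc_subset_Icc_self
  refine intervalIntegral.tendsto_integral_filter_of_dominated_convergence (fun _ => M)
    (.of_forall fun n => ?_) (.of_forall fun n => .of_forall fun t ht => ?_)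
    intervalIntegrable_const (.of_forall fun t ht => hρ.tendsto_integral hf hM hlim (hsub ht))
  · exact ((hρ.continuousOn_integral_of_bounded (hf n) ⟨M, hM n⟩).mono hsub).aestronglyMeasurable
      measurableSet_uIoc
  · have := hρ.isProbabilityMeasure t (hsub ht)
    simpa using norm_integral_le_of_norm_le_const (μ := ρ t) (.of_forall (hM n))

theorem lintegral_lintegral_ofReal_le_of_tendsto (hρ : IsNarrowCurve ρ (Set.Icc a b))
    (hab : a ≤ b) {c : ℝ} (hf : ∀ n, Continuous (f n)) (hfb : ∀ n, ∃ M, ∀ x, ‖f n x‖ ≤ M)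
    (hf0 : ∀ n x, 0 ≤ f n x) (hlim : ∀ x, Tendsto (fun n => f n x) atTop (𝓝 (g x)))
    (hc : ∀ n, ∫ t in a..b, ∫ x, f n x ∂(ρ t) ≤ c) :
    ∫⁻ t in Set.Icc a b, ∫⁻ x, ENNReal.ofReal (g x) ∂(ρ t) ≤ ENNReal.ofReal c := by
  have hcont n := hρ.continuousOn_integral_of_bounded (hf n) (hfb n)
  refine lintegral_le_of_le_liminf
    (f := fun n t => ENNReal.ofReal (∫ x, f n x ∂(ρ t)))
    (fun n => ((hcont n).aemeasurable measurableSet_Icc).ennreal_ofReal) ?_ fun n => ?_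
  · filter_upwards [ae_restrict_mem measurableSet_Icc] with t ht
    simp only [fun n => ofReal_integral_eq_lintegral_ofReal (hρ.integrable (hf n) (hfb n) ht)
      (.of_forall (hf0 n))]
    refine le_trans (lintegral_mono fun x => ?_) (lintegral_liminf_le' fun n =>
      (hf n).measurable.ennreal_ofReal.aemeasurable)
    exact (ENNReal.tendsto_ofReal (hlim x)).liminf_eq.ge
  · rw [← ofReal_integral_eq_lintegral_ofReal ((hcont n).integrableOn_compact isCompact_Icc)
        (.of_forall fun t => integral_nonneg (hf0 n)),
      integral_Icc_eq_integral_Ioc, ← intervalIntegral.integral_of_le hab]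
    exact ENNReal.ofReal_le_ofReal (hc n)

end Limits

end IsNarrowCurve

end NarrowCurve

section Gradient

variable {E : Type*} [NormedAddCommGroup E] [InnerProductSpace ℝ E] [CompleteSpace E]
  {f g : E → ℝ} {x : E}

theorem norm_gradient (f : E → ℝ) (x : E) : ‖gradient f x‖ = ‖fderiv ℝ f x‖ :=
  (InnerProductSpace.toDual ℝ E).symm.norm_map _

theorem continuous_gradient_of_contDiff {n : WithTop ℕ∞} (hf : ContDiff ℝ n f) (hn : n ≠ 0) :
    Continuous (gradient f) :=
  (InnerProductSpace.toDual ℝ E).symm.continuous.comp (hf.continuous_fderiv hn)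

theorem gradient_sub_const (f : E → ℝ) (c : ℝ) : gradient (fun y => f y - c) = gradient f := by
  ext1 x
  simp only [gradient, fderiv_sub_const]

theorem gradient_mul (hf : DifferentiableAt ℝ f x) (hg : DifferentiableAt ℝ g x) :
    gradient (fun y => f y * g y) x = f x • gradient g x + g x • gradient f x := by
  simp only [gradient, fderiv_fun_mul hf hg, map_add, map_smul]

theorem gradient_comp {φ : ℝ → ℝ} {φ' : ℝ} (hφ : HasDerivAt φ φ' (f x))
    (hf : DifferentiableAt ℝ f x) : gradient (fun y => φ (f y)) x = φ' • gradient f x := by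
  have hcomp : HasFDerivAt (fun y => φ (f y)) (φ' • fderiv ℝ f x) x :=
    hφ.comp_hasFDerivAt x hf.hasFDerivAt
  simp only [gradient, hcomp.fderiv, map_smul]

theorem gradient_eq_zero_of_eventuallyEq_const {c : ℝ} (hf : f =ᶠ[𝓝 x] fun _ => c) :
    gradient f x = 0 :=
  hf.gradient_eq.trans (gradient_fun_const x c)

theorem hasCompactSupport_gradient (hf : HasCompactSupport f) : HasCompactSupport (gradient f) :=
  (hf.fderiv ℝ).comp_left (map_zero (InnerProductSpace.toDual ℝ E).symm)

end Gradient

section Laplacian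

variable {d : ℕ} {f g : EuclideanSpace ℝ (Fin d) → ℝ} {x : EuclideanSpace ℝ (Fin d)}

theorem lapl_sub_const (f : EuclideanSpace ℝ (Fin d) → ℝ) (c : ℝ) :
    lapl (fun y => f y - c) = lapl f := by
  ext x
  simp only [lapl, fderiv_sub_const]

theorem inner_gradient_eq_sum (f g : EuclideanSpace ℝ (Fin d) → ℝ)
    (x : EuclideanSpace ℝ (Fin d)) :
    ⟪gradient f x, gradient g x⟫ = ∑ i, fderiv ℝ f x (EuclideanSpace.single i 1) *
      fderiv ℝ g x (EuclideanSpace.single i 1) := by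
  rw [← (EuclideanSpace.basisFun (Fin d) ℝ).sum_inner_mul_inner]
  simp [inner_gradient_left, inner_gradient_right]

theorem differentiable_fderiv_apply (hf : ContDiff ℝ 2 f) (v : EuclideanSpace ℝ (Fin d)) :
    Differentiable ℝ fun y => fderiv ℝ f y v :=
  ((hf.fderiv_right (m := 1) (by norm_num)).clm_apply contDiff_const).differentiable
    one_ne_zero

theorem lapl_eq_sum_fderiv_fderiv (hf : ContDiff ℝ 2 f) (x : EuclideanSpace ℝ (Fin d)) :
    lapl f x = ∑ i, fderiv ℝ (fderiv ℝ f) x (EuclideanSpace.single i 1)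
      (EuclideanSpace.single i 1) := by
  refine Finset.sum_congr rfl fun i _ => ?_
  rw [fderiv_clm_apply ((hf.fderiv_right (m := 1) (by norm_num)).differentiable one_ne_zero x)
    (differentiableAt_const _)]
  simp

theorem continuous_lapl (hf : ContDiff ℝ 2 f) : Continuous (lapl f) := by
  have : Continuous (fderiv ℝ (fderiv ℝ f)) :=
    (hf.fderiv_right (m := 1) (by norm_num)).continuous_fderiv one_ne_zero
  simp only [funext (lapl_eq_sum_fderiv_fderiv hf)]
  fun_prop

theorem abs_lapl_le (hf : ContDiff ℝ 2 f) (x : EuclideanSpace ℝ (Fin d)) :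
    |lapl f x| ≤ d * ‖fderiv ℝ (fderiv ℝ f) x‖ := by
  rw [lapl_eq_sum_fderiv_fderiv hf]
  calc _ ≤ ∑ i : Fin d, ‖fderiv ℝ (fderiv ℝ f) x (EuclideanSpace.single i 1)
          (EuclideanSpace.single i 1)‖ := Finset.abs_sum_le_sum_abs _ _
    _ ≤ ∑ _i : Fin d, ‖fderiv ℝ (fderiv ℝ f) x‖ := Finset.sum_le_sum fun i _ => by
      simpa using (fderiv ℝ (fderiv ℝ f) x).le_opNorm₂ (EuclideanSpace.single i 1)
        (EuclideanSpace.single i 1)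
    _ = d * ‖fderiv ℝ (fderiv ℝ f) x‖ := by simp

theorem lapl_eq_zero_of_eventuallyEq_const {c : ℝ} (hf : f =ᶠ[𝓝 x] fun _ => c) : lapl f x = 0 := by
  refine Finset.sum_eq_zero fun i _ => ?_
  have hfirst : (fun y => fderiv ℝ f y (EuclideanSpace.single i 1)) =ᶠ[𝓝 x] fun _ => 0 := by
    filter_upwards [hf.fderiv (𝕜 := ℝ)] with y hy
    simp [hy]
  simp [hfirst.fderiv_eq]

theorem hasCompactSupport_lapl (hf : HasCompactSupport f) : HasCompactSupport (lapl f) :=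
  .intro' hf (isClosed_tsupport f) fun _ hx =>
    lapl_eq_zero_of_eventuallyEq_const (notMem_tsupport_iff_eventuallyEq.mp hx)

theorem lapl_mul (hf : ContDiff ℝ 2 f) (hg : ContDiff ℝ 2 g) (x : EuclideanSpace ℝ (Fin d)) :
    lapl (fun y => f y * g y) x =
      f x * lapl g x + 2 * ⟪gradient f x, gradient g x⟫ + g x * lapl f x := by
  have hdf : Differentiable ℝ f := hf.differentiable two_ne_zero
  have hdg : Differentiable ℝ g := hg.differentiable two_ne_zero
  simp only [lapl, inner_gradient_eq_sum, Finset.mul_sum, ← Finset.sum_add_distrib]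
  refine Finset.sum_congr rfl fun i _ => ?_
  have hfirst : (fun y => fderiv ℝ (fun z => f z * g z) y (EuclideanSpace.single i 1)) =
      fun y => f y * fderiv ℝ g y (EuclideanSpace.single i 1) +
        g y * fderiv ℝ f y (EuclideanSpace.single i 1) := by
    ext y
    simp [fderiv_fun_mul (hdf y) (hdg y)]
  have hf' := differentiable_fderiv_apply hf (EuclideanSpace.single i 1) x
  have hg' := differentiable_fderiv_apply hg (EuclideanSpace.single i 1) x
  rw [hfirst, fderiv_fun_add ((hdf x).fun_mul hg') ((hdg x).fun_mul hf'),
    fderiv_fun_mul (hdf x) hg', fderiv_fun_mul (hdg x) hf']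
  simp only [add_apply, smul_apply, smul_eq_mul]
  ring

theorem lapl_comp {φ φ' : ℝ → ℝ} {φ'' : ℝ} (hφ : ∀ r, HasDerivAt φ (φ' r) r)
    (hφ' : HasDerivAt φ' φ'' (f x)) (hf : ContDiff ℝ 2 f) :
    lapl (fun y => φ (f y)) x = φ' (f x) * lapl f x + φ'' * ‖gradient f x‖ ^ 2 := by
  have hdf : Differentiable ℝ f := hf.differentiable two_ne_zero
  simp only [lapl, ← real_inner_self_eq_norm_sq, inner_gradient_eq_sum, Finset.mul_sum,
    ← Finset.sum_add_distrib]
  refine Finset.sum_congr rfl fun i _ => ?_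
  have hfirst : (fun y => fderiv ℝ (fun z => φ (f z)) y (EuclideanSpace.single i 1)) =
      fun y => φ' (f y) * fderiv ℝ f y (EuclideanSpace.single i 1) := by
    ext y
    have hcomp : HasFDerivAt (fun z => φ (f z)) (φ' (f y) • fderiv ℝ f y) y :=
      (hφ (f y)).comp_hasFDerivAt y (hdf y).hasFDerivAt
    simp [hcomp.fderiv]
  have hcomp : HasFDerivAt (fun y => φ' (f y)) (φ'' • fderiv ℝ f x) x :=
    hφ'.comp_hasFDerivAt x (hdf x).hasFDerivAt
  rw [hfirst, fderiv_fun_mul hcomp.differentiableAt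
    (differentiable_fderiv_apply hf (EuclideanSpace.single i 1) x), hcomp.fderiv]
  simp only [add_apply, smul_apply, smul_eq_mul]
  ring

end Laplacian

section Mollification

variable {E : Type*} [NormedAddCommGroup E] [NormedSpace ℝ E] [FiniteDimensional ℝ E]

/-- Bump functions centred at the origin whose supports shrink to it; they serve as mollifiers. -/
noncomputable def shrinkingBump (E : Type*) [NormedAddCommGroup E] [NormedSpace ℝ E]
    [FiniteDimensional ℝ E] (n : ℕ) : ContDiffBump (0 : E) where
  rIn := 1 / ((n : ℝ) + 1) / 2
  rOut := 1 / ((n : ℝ) + 1)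
  rIn_pos := by positivity
  rIn_lt_rOut := half_lt_self (by positivity)

theorem rOut_shrinkingBump_le_one (n : ℕ) : (shrinkingBump E n).rOut ≤ 1 :=
  div_le_one_of_le₀ (le_add_of_nonneg_left n.cast_nonneg) (by positivity)

theorem tendsto_rOut_shrinkingBump : Tendsto (fun n => (shrinkingBump E n).rOut) atTop (𝓝 0) :=
  tendsto_one_div_add_atTop_nhds_zero_nat

variable [MeasurableSpace E] {F : Type*} [NormedAddCommGroup F] [NormedSpace ℝ F]

/-- Convolution of `g` with the bump function `φ`, normalised to have `μ`-integral one. -/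
noncomputable def mollify (φ : ContDiffBump (0 : E)) (μ : Measure E) (g : E → F) : E → F :=
  convolution (φ.normed μ) g (ContinuousLinearMap.lsmul ℝ ℝ) μ

variable [BorelSpace E] {φ : ContDiffBump (0 : E)} {μ : Measure E} [μ.IsAddHaarMeasure] {g : E → F}

theorem contDiff_mollify (hg : Continuous g) {n : ℕ∞} : ContDiff ℝ n (mollify φ μ g) :=
  φ.hasCompactSupport_normed.contDiff_convolution_left _ φ.contDiff_normed hg.locallyIntegrable

theorem fderiv_mollify (hg : ContDiff ℝ 1 g) (hgc : HasCompactSupport g) :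
    fderiv ℝ (mollify φ μ g) = mollify φ μ (fderiv ℝ g) := by
  ext1 x
  exact (hgc.hasFDerivAt_convolution_right (ContinuousLinearMap.lsmul ℝ ℝ)
    φ.continuous_normed.locallyIntegrable hg x).fderiv

theorem tsupport_mollify_subset {R : ℝ} (hg : tsupport g ⊆ Metric.closedBall 0 R) :
    tsupport (mollify φ μ g) ⊆ Metric.closedBall 0 (R + φ.rOut) := by
  refine closure_minimal ?_ Metric.isClosed_closedBall
  refine (support_convolution_subset_swap _).trans ?_
  rintro _ ⟨y, hy, z, hz, rfl⟩
  rw [φ.support_normed_eq] at hz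
  exact mem_closedBall_zero_iff.mpr ((norm_add_le y z).trans (add_le_add
    (mem_closedBall_zero_iff.mp (hg (subset_tsupport g hy))) (mem_ball_zero_iff.mp hz).le))

variable [CompleteSpace F]

theorem exists_norm_mollify_le (μ : Measure E) [μ.IsAddHaarMeasure] (hg : Continuous g)
    (hgc : HasCompactSupport g) :
    ∃ M, ∀ (φ : ContDiffBump (0 : E)) (x : E), ‖mollify φ μ g x‖ ≤ M := by
  obtain ⟨M, hM⟩ := hg.bounded_above_of_compact_support hgc
  refine ⟨M, fun φ x => ?_⟩
  rw [← dist_zero_right]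
  exact dist_convolution_le ((norm_nonneg _).trans (hM 0)) φ.support_normed_eq.subset
    φ.nonneg_normed φ.integral_normed hg.aestronglyMeasurable
    fun y _ => (dist_zero_right (g y)).trans_le (hM y)

theorem tendsto_mollify_shrinkingBump (hg : Continuous g) (x : E) :
    Tendsto (fun n => mollify (shrinkingBump E n) μ g x) atTop (𝓝 (g x)) :=
  ContDiffBump.convolution_tendsto_right_of_continuous tendsto_rOut_shrinkingBump hg x

theorem exists_norm_fderiv_mollify_le (μ : Measure E) [μ.IsAddHaarMeasure] (hg : ContDiff ℝ 1 g)
    (hgc : HasCompactSupport g) :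
    ∃ M, ∀ (φ : ContDiffBump (0 : E)) (x : E), ‖fderiv ℝ (mollify φ μ g) x‖ ≤ M := by
  obtain ⟨M, hM⟩ :=
    exists_norm_mollify_le μ (hg.continuous_fderiv one_ne_zero) (hgc.fderiv ℝ)
  exact ⟨M, fun φ x => by simpa only [fderiv_mollify hg hgc] using hM φ x⟩

theorem tendsto_fderiv_mollify_shrinkingBump (hg : ContDiff ℝ 1 g) (hgc : HasCompactSupport g)
    (x : E) :
    Tendsto (fun n => fderiv ℝ (mollify (shrinkingBump E n) μ g) x) atTop (𝓝 (fderiv ℝ g x)) := by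
  simpa only [fderiv_mollify hg hgc] using
    tendsto_mollify_shrinkingBump (hg.continuous_fderiv one_ne_zero) x

end Mollification

section SmoothApproximation

/-- `p n → q` pointwise together with two derivatives, all of them being bounded by `M` and
supported in the ball of radius `R`. -/
structure TendstoBoundedC2 {E : Type*} [NormedAddCommGroup E] [NormedSpace ℝ E] (p : ℕ → E → ℝ)
    (q : E → ℝ) (M R : ℝ) : Prop where
  tsupport_subset : ∀ n, tsupport (p n) ⊆ Metric.closedBall 0 R
  norm_le : ∀ n x, ‖p n x‖ ≤ M
  norm_fderiv_le : ∀ n x, ‖fderiv ℝ (p n) x‖ ≤ M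
  norm_fderiv_fderiv_le : ∀ n x, ‖fderiv ℝ (fderiv ℝ (p n)) x‖ ≤ M
  tendsto : ∀ x, Tendsto (fun n => p n x) atTop (𝓝 (q x))
  tendsto_fderiv : ∀ x, Tendsto (fun n => fderiv ℝ (p n) x) atTop (𝓝 (fderiv ℝ q x))
  tendsto_fderiv_fderiv : ∀ x, Tendsto (fun n => fderiv ℝ (fderiv ℝ (p n)) x) atTop
    (𝓝 (fderiv ℝ (fderiv ℝ q) x))

variable {E : Type*} [NormedAddCommGroup E] [NormedSpace ℝ E] [FiniteDimensional ℝ E]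

theorem exists_tendstoBoundedC2_mollify [MeasurableSpace E] [BorelSpace E] (μ : Measure E)
    [μ.IsAddHaarMeasure] {q : E → ℝ} (hq : ContDiff ℝ 2 q) (hqc : HasCompactSupport q) :
    ∃ M R, TendstoBoundedC2 (fun n => mollify (shrinkingBump E n) μ q) q M R := by
  have hq' : ContDiff ℝ 1 q := hq.of_le one_le_two
  have hdq : ContDiff ℝ 1 (fderiv ℝ q) := hq.fderiv_right (by norm_num)
  have hdqc : HasCompactSupport (fderiv ℝ q) := hqc.fderiv ℝ
  obtain ⟨M₀, hM₀⟩ := exists_norm_mollify_le μ hq.continuous hqc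
  obtain ⟨M₁, hM₁⟩ := exists_norm_fderiv_mollify_le μ hq' hqc
  obtain ⟨M₂, hM₂⟩ := exists_norm_fderiv_mollify_le μ hdq hdqc
  obtain ⟨R, hR⟩ := hqc.isCompact.isBounded.subset_closedBall 0
  refine ⟨max M₀ (max M₁ M₂), R + 1, ?_⟩
  constructor
  case tsupport_subset =>
    exact fun n => (tsupport_mollify_subset hR).trans
      (Metric.closedBall_subset_closedBall (by grw [rOut_shrinkingBump_le_one]))
  case norm_le => exact fun n x => (hM₀ _ x).trans (le_max_left _ _)
  case norm_fderiv_le =>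
    exact fun n x => (hM₁ _ x).trans (le_max_of_le_right (le_max_left _ _))
  case norm_fderiv_fderiv_le =>
    intro n x
    rw [fderiv_mollify hq' hqc]
    exact (hM₂ _ x).trans (le_max_of_le_right (le_max_right _ _))
  case tendsto => exact tendsto_mollify_shrinkingBump hq.continuous
  case tendsto_fderiv => exact tendsto_fderiv_mollify_shrinkingBump hq' hqc
  case tendsto_fderiv_fderiv =>
    simp only [fderiv_mollify hq' hqc]
    exact tendsto_fderiv_mollify_shrinkingBump hdq hdqc

theorem exists_contDiff_tendstoBoundedC2 {q : E → ℝ} (hq : ContDiff ℝ 2 q)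
    (hqc : HasCompactSupport q) :
    ∃ (p : ℕ → E → ℝ) (M R : ℝ), (∀ n, ContDiff ℝ (⊤ : ℕ∞) (p n)) ∧ TendstoBoundedC2 p q M R := by
  borelize E
  obtain ⟨M, R, h⟩ := exists_tendstoBoundedC2_mollify Measure.addHaar hq hqc
  exact ⟨_, M, R, fun n => contDiff_mollify hq.continuous, h⟩

end SmoothApproximation

section Hamiltonian

variable {d : ℕ} {Ψ p q : EuclideanSpace ℝ (Fin d) → ℝ}

/-- The Hamiltonian `H(x, p) = Δp - ∇Ψ · ∇p + |∇p|² / 2` of the Fokker-Planck equation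
`∂ₜρ = Δρ + div(ρ∇Ψ)`. -/
noncomputable def hamiltonian (Ψ p : EuclideanSpace ℝ (Fin d) → ℝ)
    (x : EuclideanSpace ℝ (Fin d)) : ℝ :=
  lapl p x - ⟪gradient Ψ x, gradient p x⟫ + 1 / 2 * ‖gradient p x‖ ^ 2

/-- The functional of the test function `p` whose supremum over `p` is the rate functional of the
curve `ρ` on `[0, s]`. -/
noncomputable def testAction (Ψ : EuclideanSpace ℝ (Fin d) → ℝ)
    (ρ : ℝ → Measure (EuclideanSpace ℝ (Fin d))) (s : ℝ) (p : EuclideanSpace ℝ (Fin d) → ℝ) : ℝ :=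
  ∫ x, p x ∂(ρ s) - ∫ x, p x ∂(ρ 0) - ∫ t in 0..s, ∫ x, hamiltonian Ψ p x ∂(ρ t)

theorem continuous_hamiltonian (hΨ : ContDiff ℝ 1 Ψ) (hp : ContDiff ℝ 2 p) :
    Continuous (hamiltonian Ψ p) := by
  have hgradΨ := continuous_gradient_of_contDiff hΨ one_ne_zero
  have hgradp := continuous_gradient_of_contDiff hp two_ne_zero
  have hlapl := continuous_lapl hp
  unfold hamiltonian
  fun_prop

theorem hamiltonian_eq_zero_of_notMem_tsupport {x : EuclideanSpace ℝ (Fin d)}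
    (hx : x ∉ tsupport p) : hamiltonian Ψ p x = 0 := by
  have hp0 : p =ᶠ[𝓝 x] fun _ => 0 := notMem_tsupport_iff_eventuallyEq.mp hx
  simp [hamiltonian, lapl_eq_zero_of_eventuallyEq_const hp0,
    gradient_eq_zero_of_eventuallyEq_const hp0]

theorem exists_norm_hamiltonian_le (hΨ : ContDiff ℝ 1 Ψ) (hp : ContDiff ℝ 2 p)
    (hpc : HasCompactSupport p) : ∃ M, ∀ x, ‖hamiltonian Ψ p x‖ ≤ M :=
  (continuous_hamiltonian hΨ hp).bounded_above_of_compact_support <|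
    .intro' hpc (isClosed_tsupport p) fun _ => hamiltonian_eq_zero_of_notMem_tsupport

theorem abs_hamiltonian_le (hp : ContDiff ℝ 2 p) (x : EuclideanSpace ℝ (Fin d)) :
    |hamiltonian Ψ p x| ≤ d * ‖fderiv ℝ (fderiv ℝ p) x‖ + ‖gradient Ψ x‖ * ‖fderiv ℝ p x‖ +
      1 / 2 * ‖fderiv ℝ p x‖ ^ 2 := by
  have hinner := abs_real_inner_le_norm (gradient Ψ x) (gradient p x)
  rw [← norm_gradient p x]
  calc |hamiltonian Ψ p x|
      ≤ |lapl p x| + |⟪gradient Ψ x, gradient p x⟫| + |1 / 2 * ‖gradient p x‖ ^ 2| :=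
        (abs_add_le _ _).trans (by gcongr; exact abs_sub _ _)
    _ ≤ _ := by
        rw [abs_of_nonneg (by positivity : 0 ≤ 1 / 2 * ‖gradient p x‖ ^ 2)]
        gcongr
        exact abs_lapl_le hp x

theorem testAction_eq {ρ : ℝ → Measure (EuclideanSpace ℝ (Fin d))} {s : ℝ} (hs : 0 ≤ s)
    (hρ : IsNarrowCurve ρ (Set.Icc 0 s)) (hΨ : ContDiff ℝ 1 Ψ) (hp : ContDiff ℝ 2 p)
    (hpc : HasCompactSupport p) :
    testAction Ψ ρ s p = ∫ x, p x ∂(ρ s) - ∫ x, p x ∂(ρ 0) - (∫ t in 0..s, ∫ x, lapl p x ∂(ρ t)) +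
      (∫ t in 0..s, ∫ x, ⟪gradient Ψ x, gradient p x⟫ ∂(ρ t)) -
      1 / 2 * ∫ t in 0..s, ∫ x, ‖gradient p x‖ ^ 2 ∂(ρ t) := by
  have hgradΨ := continuous_gradient_of_contDiff hΨ one_ne_zero
  have hgradp := continuous_gradient_of_contDiff hp two_ne_zero
  have hlapl := continuous_lapl hp
  have hgradpc := hasCompactSupport_gradient hpc
  have hlaplb := hlapl.bounded_above_of_compact_support (hasCompactSupport_lapl hpc)
  have hinnerb : ∃ M, ∀ x, ‖⟪gradient Ψ x, gradient p x⟫‖ ≤ M :=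
    Continuous.bounded_above_of_compact_support (by fun_prop)
      (hgradpc.mono fun x hx h0 => hx (by simp [h0]))
  have hsqb : ∃ M, ∀ x, ‖-(1 / 2) * ‖gradient p x‖ ^ 2‖ ≤ M :=
    Continuous.bounded_above_of_compact_support (by fun_prop)
      (hgradpc.mono fun x hx h0 => hx (by simp [h0]))
  have hdiffb : ∃ M, ∀ x, ‖lapl p x - ⟪gradient Ψ x, gradient p x⟫‖ ≤ M :=
    let ⟨M₁, hM₁⟩ := hlaplb
    let ⟨M₂, hM₂⟩ := hinnerb
    ⟨M₁ + M₂, fun x => norm_sub_le_of_le (hM₁ x) (hM₂ x)⟩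
  have hsplit : hamiltonian Ψ p = fun x =>
      (lapl p x - ⟪gradient Ψ x, gradient p x⟫) - -(1 / 2) * ‖gradient p x‖ ^ 2 := by
    ext x
    rw [hamiltonian]
    ring
  simp only [testAction, hsplit]
  rw [hρ.integral_integral_sub hs (by fun_prop) hdiffb (by fun_prop) hsqb,
    hρ.integral_integral_sub hs hlapl hlaplb (by fun_prop) hinnerb]
  simp only [integral_const_mul, intervalIntegral.integral_const_mul]
  ring

variable {p : ℕ → EuclideanSpace ℝ (Fin d) → ℝ} {M R : ℝ}

theorem tendsto_hamiltonian (h : TendstoBoundedC2 p q M R) (hp : ∀ n, ContDiff ℝ 2 (p n))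
    (hq : ContDiff ℝ 2 q) (x : EuclideanSpace ℝ (Fin d)) :
    Tendsto (fun n => hamiltonian Ψ (p n) x) atTop (𝓝 (hamiltonian Ψ q x)) := by
  have hgrad : Tendsto (fun n => gradient (p n) x) atTop (𝓝 (gradient q x)) :=
    ((InnerProductSpace.toDual ℝ _).symm.continuous.tendsto _).comp (h.tendsto_fderiv x)
  have hlapl : Tendsto (fun n => lapl (p n) x) atTop (𝓝 (lapl q x)) := by
    simp only [lapl_eq_sum_fderiv_fderiv hq, fun n => lapl_eq_sum_fderiv_fderiv (hp n)]
    have hcont i : Continuous fun A : EuclideanSpace ℝ (Fin d) →L[ℝ]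
        EuclideanSpace ℝ (Fin d) →L[ℝ] ℝ =>
        A (EuclideanSpace.single i 1) (EuclideanSpace.single i 1) := by fun_prop
    exact tendsto_finsetSum _ fun i _ => ((hcont i).tendsto _).comp (h.tendsto_fderiv_fderiv x)
  exact (hlapl.sub (tendsto_const_nhds.inner hgrad)).add ((hgrad.norm.pow 2).const_mul _)

theorem exists_uniform_norm_hamiltonian_le (h : TendstoBoundedC2 p q M R)
    (hp : ∀ n, ContDiff ℝ 2 (p n)) (hΨ : ContDiff ℝ 1 Ψ) :
    ∃ K, ∀ n x, ‖hamiltonian Ψ (p n) x‖ ≤ K := by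
  obtain ⟨G, hG⟩ := (isCompact_closedBall (0 : EuclideanSpace ℝ (Fin d)) R)
    |>.exists_bound_of_continuousOn (continuous_gradient_of_contDiff hΨ one_ne_zero).continuousOn
  have hM : 0 ≤ M := (norm_nonneg _).trans (h.norm_le 0 0)
  refine ⟨d * M + max G 0 * M + 1 / 2 * M ^ 2, fun n x => ?_⟩
  by_cases hx : x ∈ Metric.closedBall 0 R
  · refine (abs_hamiltonian_le (hp n) x).trans ?_
    gcongr
    exacts [h.norm_fderiv_fderiv_le n x, (hG x hx).trans (le_max_left _ _),
      h.norm_fderiv_le n x, h.norm_fderiv_le n x]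
  · rw [hamiltonian_eq_zero_of_notMem_tsupport fun hx' => hx (h.tsupport_subset n hx'), norm_zero]
    positivity

theorem tendsto_testAction {ρ : ℝ → Measure (EuclideanSpace ℝ (Fin d))} {s : ℝ} (hs : 0 ≤ s)
    (hρ : IsNarrowCurve ρ (Set.Icc 0 s)) (hΨ : ContDiff ℝ 1 Ψ) (h : TendstoBoundedC2 p q M R)
    (hp : ∀ n, ContDiff ℝ 2 (p n)) (hq : ContDiff ℝ 2 q) :
    Tendsto (fun n => testAction Ψ ρ s (p n)) atTop (𝓝 (testAction Ψ ρ s q)) := by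
  obtain ⟨K, hK⟩ := exists_uniform_norm_hamiltonian_le h hp hΨ
  have hpcont n := (hp n).continuous
  exact ((hρ.tendsto_integral hpcont h.norm_le h.tendsto (Set.right_mem_Icc.mpr hs)).sub
    (hρ.tendsto_integral hpcont h.norm_le h.tendsto (Set.left_mem_Icc.mpr hs))).sub
    (hρ.tendsto_integral_integral hs (fun n => continuous_hamiltonian hΨ (hp n)) hK
      (tendsto_hamiltonian h hp hq))

theorem testAction_le_of_contDiff_two {ρ : ℝ → Measure (EuclideanSpace ℝ (Fin d))} {s J : ℝ}
    (hs : 0 ≤ s) (hρ : IsNarrowCurve ρ (Set.Icc 0 s)) (hΨ : ContDiff ℝ 1 Ψ)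
    (hJ : ∀ p, ContDiff ℝ (⊤ : ℕ∞) p → HasCompactSupport p → testAction Ψ ρ s p ≤ J)
    (hq : ContDiff ℝ 2 q) (hqc : HasCompactSupport q) : testAction Ψ ρ s q ≤ J := by
  obtain ⟨p, M, R, hp, h⟩ := exists_contDiff_tendstoBoundedC2 hq hqc
  have hpc n : HasCompactSupport (p n) :=
    (isCompact_closedBall 0 R).of_isClosed_subset (isClosed_tsupport _) (h.tsupport_subset n)
  have hp2 n : ContDiff ℝ 2 (p n) := contDiff_infty.mp (hp n) 2
  exact le_of_tendsto' (tendsto_testAction hs hρ hΨ h hp2 hq) fun n => hJ _ (hp n) (hpc n)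

end Hamiltonian

section Cutoff

variable {E : Type*} [NormedAddCommGroup E] [NormedSpace ℝ E] [FiniteDimensional ℝ E] {n : ℕ}

/-- Cutoff functions which exhaust the space: `expandingBump E n` is one on the ball of radius
`n + 1` and supported in the ball of radius `2 * (n + 1)`. The constant ratio of the radii makes
them rescalings of each other. -/
noncomputable def expandingBump (E : Type*) [NormedAddCommGroup E] [NormedSpace ℝ E]
    [FiniteDimensional ℝ E] (n : ℕ) : ContDiffBump (0 : E) where
  rIn := n + 1
  rOut := 2 * (n + 1)
  rIn_pos := by positivity
  rIn_lt_rOut := lt_mul_of_one_lt_left (by positivity) one_lt_two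

theorem expandingBump_eq_comp_smul (n : ℕ) :
    ⇑(expandingBump E n) = fun x => expandingBump E 0 (((n : ℝ) + 1)⁻¹ • x) := by
  ext x
  have hn : (n : ℝ) + 1 ≠ 0 := by positivity
  simp [ContDiffBump.apply, expandingBump, hn]

theorem fderiv_expandingBump (n : ℕ) : fderiv ℝ (expandingBump E n) = fun x =>
    ((n : ℝ) + 1)⁻¹ • fderiv ℝ (expandingBump E 0) (((n : ℝ) + 1)⁻¹ • x) := by
  ext1 x
  rw [expandingBump_eq_comp_smul, fderiv_comp_smul]

theorem norm_fderiv_smul_comp_smul {E F : Type*} [NormedAddCommGroup E] [NormedSpace ℝ E]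
    [NormedAddCommGroup F] [NormedSpace ℝ F] {g : E → F} (hg : Differentiable ℝ g) (c : ℝ) (x : E) :
    ‖fderiv ℝ (fun y => c • g (c • y)) x‖ = ‖c‖ ^ 2 * ‖fderiv ℝ g (c • x)‖ := by
  have hdiff : DifferentiableAt ℝ (fun y => g (c • y)) x :=
    hg.comp (differentiable_id.const_smul c) x
  rw [fderiv_fun_const_smul hdiff, fderiv_comp_smul, smul_smul, norm_smul, norm_mul, sq]

theorem exists_norm_fderiv_le_of_hasCompactSupport {E F : Type*} [NormedAddCommGroup E]
    [NormedSpace ℝ E] [NormedAddCommGroup F] [NormedSpace ℝ F] {g : E → F} (hg : ContDiff ℝ 1 g)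
    (hgc : HasCompactSupport g) : ∃ M, ∀ x, ‖fderiv ℝ g x‖ ≤ M :=
  (hg.continuous_fderiv one_ne_zero).bounded_above_of_compact_support (hgc.fderiv ℝ)

theorem exists_one_add_norm_mul_norm_fderiv_expandingBump_le (E : Type*) [NormedAddCommGroup E]
    [NormedSpace ℝ E] [FiniteDimensional ℝ E] :
    ∃ M, ∀ n (x : E), (1 + ‖x‖) * ‖fderiv ℝ (expandingBump E n) x‖ ≤ M := by
  obtain ⟨M, hM⟩ := exists_norm_fderiv_le_of_hasCompactSupport
    ((expandingBump E 0).contDiff (n := 1)) (expandingBump E 0).hasCompactSupport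
  have hM0 : 0 ≤ M := (norm_nonneg _).trans (hM 0)
  refine ⟨3 * M, fun n x => ?_⟩
  by_cases hx : x ∈ tsupport (expandingBump E n)
  · have hxn : 1 + ‖x‖ ≤ 3 * ((n : ℝ) + 1) := by
      rw [ContDiffBump.tsupport_eq, mem_closedBall_zero_iff] at hx
      have hrOut : (expandingBump E n).rOut = 2 * ((n : ℝ) + 1) := rfl
      linarith [n.cast_nonneg (α := ℝ)]
    rw [fderiv_expandingBump, norm_smul, Real.norm_of_nonneg (by positivity)]
    calc (1 + ‖x‖) * (((n : ℝ) + 1)⁻¹ * ‖fderiv ℝ (expandingBump E 0) (((n : ℝ) + 1)⁻¹ • x)‖)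
        ≤ 3 * ((n : ℝ) + 1) * (((n : ℝ) + 1)⁻¹ * M) := by gcongr; exact hM _
      _ = 3 * M := by field_simp
  · rw [image_eq_zero_of_notMem_tsupport fun h => hx (tsupport_fderiv_subset ℝ h), norm_zero,
      mul_zero]
    positivity

theorem exists_norm_fderiv_fderiv_expandingBump_le (E : Type*) [NormedAddCommGroup E]
    [NormedSpace ℝ E] [FiniteDimensional ℝ E] :
    ∃ M, ∀ n (x : E), ‖fderiv ℝ (fderiv ℝ (expandingBump E n)) x‖ ≤ M := by
  have hcont : ContDiff ℝ 1 (fderiv ℝ (expandingBump E 0)) :=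
    ((expandingBump E 0).contDiff (n := 2)).fderiv_right (by norm_num)
  obtain ⟨M, hM⟩ := exists_norm_fderiv_le_of_hasCompactSupport hcont
    ((expandingBump E 0).hasCompactSupport.fderiv ℝ)
  have : 0 ≤ M := (norm_nonneg _).trans (hM 0)
  refine ⟨M, fun n x => ?_⟩
  have hinv : ‖((n : ℝ) + 1)⁻¹‖ ≤ 1 := by
    rw [Real.norm_of_nonneg (by positivity)]
    exact inv_le_one_of_one_le₀ (by simp)
  rw [fderiv_expandingBump, norm_fderiv_smul_comp_smul (hcont.differentiable one_ne_zero)]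
  grw [hinv, hM, one_pow, one_mul]

theorem eventually_expandingBump_eventuallyEq_one (x : E) :
    ∀ᶠ n in atTop, expandingBump E n =ᶠ[𝓝 x] fun _ => 1 := by
  obtain ⟨k, hk⟩ := exists_nat_gt ‖x‖
  filter_upwards [eventually_ge_atTop k] with n hn
  refine (expandingBump E n).eventuallyEq_one_of_mem_ball (mem_ball_zero_iff.mpr ?_)
  calc ‖x‖ < k := hk
    _ ≤ n := by exact_mod_cast hn
    _ ≤ n + 1 := by simp

theorem tendsto_expandingBump (x : E) : Tendsto (fun n => expandingBump E n x) atTop (𝓝 1) :=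
  tendsto_nhds_of_eventually_eq
    ((eventually_expandingBump_eventuallyEq_one x).mono fun _ h => h.eq_of_nhds)

theorem expandingBump_le_of_two_mul_lt {m : ℕ} (h : 2 * m < n) (x : E) :
    expandingBump E m x ≤ expandingBump E n x := by
  rcases le_or_gt ‖x‖ (n + 1) with hx | hx
  · rw [(expandingBump E n).one_of_mem_closedBall (mem_closedBall_zero_iff.mpr hx)]
    exact (expandingBump E m).le_one
  · have hmn : (2 * m + 1 : ℝ) ≤ n := by exact_mod_cast h
    rw [(expandingBump E m).zero_of_le_dist]
    · exact (expandingBump E n).nonneg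
    · rw [dist_zero_right]
      exact (by linarith : 2 * ((m : ℝ) + 1) ≤ n + 1).trans hx.le

end Cutoff

section ExponentialTruncation

variable {ε r : ℝ}

/-- A smooth increasing concave function on `[0, ∞)`, bounded by `1 / ε`, which approximates the
identity as `ε → 0`. -/
noncomputable def expTrunc (ε r : ℝ) : ℝ := (1 - Real.exp (-(ε * r))) / ε

theorem hasDerivAt_exp_neg_mul (ε r : ℝ) :
    HasDerivAt (fun r => Real.exp (-(ε * r))) (-(ε * Real.exp (-(ε * r)))) r := by
  simpa [mul_comm] using (hasDerivAt_const_mul (x := r) ε).neg.exp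

theorem hasDerivAt_expTrunc (hε : ε ≠ 0) (r : ℝ) :
    HasDerivAt (expTrunc ε) (Real.exp (-(ε * r))) r := by
  have h := ((hasDerivAt_exp_neg_mul ε r).const_sub 1).div_const ε
  rwa [neg_neg, mul_div_cancel_left₀ _ hε] at h

theorem contDiff_expTrunc {n : WithTop ℕ∞} : ContDiff ℝ n (expTrunc ε) := by
  unfold expTrunc
  fun_prop

theorem expTrunc_nonneg (hε : 0 < ε) (hr : 0 ≤ r) : 0 ≤ expTrunc ε r :=
  div_nonneg (sub_nonneg.mpr (Real.exp_le_one_iff.mpr (neg_nonpos.mpr (by positivity)))) hε.le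

theorem expTrunc_le_one_div (hε : 0 < ε) (r : ℝ) : expTrunc ε r ≤ 1 / ε :=
  div_le_div_of_nonneg_right (sub_le_self _ (Real.exp_nonneg _)) hε.le

theorem expTrunc_le_self (hε : 0 < ε) (r : ℝ) : expTrunc ε r ≤ r := by
  rw [expTrunc, div_le_iff₀ hε]
  linarith [Real.add_one_le_exp (-(ε * r))]

theorem mul_exp_neg_mul_le_expTrunc (hε : 0 < ε) (r : ℝ) :
    r * Real.exp (-(ε * r)) ≤ expTrunc ε r := by
  rw [expTrunc, le_div_iff₀ hε]
  have hexp : Real.exp (-(ε * r)) * Real.exp (ε * r) = 1 := by rw [← Real.exp_add]; simp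
  nlinarith [mul_le_mul_of_nonneg_left (Real.add_one_le_exp (ε * r)) (Real.exp_nonneg (-(ε * r)))]

theorem tendsto_exp_neg_mul_nhds_zero (r : ℝ) :
    Tendsto (fun ε => Real.exp (-(ε * r))) (𝓝 0) (𝓝 1) := by
  have hcont : Continuous fun ε => Real.exp (-(ε * r)) := by fun_prop
  simpa using hcont.tendsto 0

theorem tendsto_expTrunc (r : ℝ) : Tendsto (fun ε => expTrunc ε r) (𝓝[>] 0) (𝓝 r) := by
  have hlower : Tendsto (fun ε => r * Real.exp (-(ε * r))) (𝓝[>] 0) (𝓝 r) := by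
    simpa using ((tendsto_exp_neg_mul_nhds_zero r).mono_left nhdsWithin_le_nhds).const_mul r
  exact tendsto_of_tendsto_of_tendsto_of_le_of_le' hlower tendsto_const_nhds
    (eventually_mem_nhdsWithin.mono fun _ hε => mul_exp_neg_mul_le_expTrunc hε r)
    (eventually_mem_nhdsWithin.mono fun _ hε => expTrunc_le_self hε r)

end ExponentialTruncation

section LocalizedHamiltonian

variable {d : ℕ} {V χ : EuclideanSpace ℝ (Fin d) → ℝ}

/-- Bound for the terms of the Hamiltonian of `χ * φ ∘ V` which contain derivatives of the cutoff
function `χ`, for increasing concave `φ` with slope at most `1` and values in `[0, K]`. -/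
noncomputable def cutoffError (V : EuclideanSpace ℝ (Fin d) → ℝ) (K : ℝ)
    (χ : EuclideanSpace ℝ (Fin d) → ℝ) (x : EuclideanSpace ℝ (Fin d)) : ℝ :=
  (2 + K) * (‖gradient V x‖ * ‖gradient χ x‖) + K * |lapl χ x| + 1 / 2 * K ^ 2 * ‖gradient χ x‖ ^ 2

theorem hamiltonian_mul_comp {φ φ' : ℝ → ℝ} {φ'' : ℝ} {x : EuclideanSpace ℝ (Fin d)}
    (hφ : ContDiff ℝ 2 φ) (hφ' : ∀ r, HasDerivAt φ (φ' r) r) (hφ'' : HasDerivAt φ' φ'' (V x))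
    (hV : ContDiff ℝ 2 V) (hχ : ContDiff ℝ 2 χ) :
    hamiltonian V (fun y => χ y * φ (V y)) x =
      χ x * φ' (V x) * lapl V x + χ x * φ'' * ‖gradient V x‖ ^ 2 +
      (2 * φ' (V x) - φ (V x) * (1 - χ x * φ' (V x))) * ⟪gradient V x, gradient χ x⟫ +
      φ (V x) * lapl χ x + 1 / 2 * φ (V x) ^ 2 * ‖gradient χ x‖ ^ 2 -
      χ x * φ' (V x) * (1 - 1 / 2 * (χ x * φ' (V x))) * ‖gradient V x‖ ^ 2 := by
  have hφV : ContDiff ℝ 2 fun y => φ (V y) := hφ.comp hV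
  have hgrad : gradient (fun y => φ (V y)) x = φ' (V x) • gradient V x :=
    gradient_comp (hφ' _) (hV.differentiable two_ne_zero x)
  rw [hamiltonian, lapl_mul hχ hφV, lapl_comp hφ' hφ'' hV,
    gradient_mul (hχ.differentiable two_ne_zero x) (hφV.differentiable two_ne_zero x), hgrad,
    norm_add_sq_real]
  simp only [inner_add_right, inner_smul_right, inner_smul_left, norm_smul, Real.norm_eq_abs,
    mul_pow, sq_abs, real_inner_self_eq_norm_sq, real_inner_comm (gradient V x) (gradient χ x),
    RCLike.conj_to_real]
  ring

theorem hamiltonian_mul_comp_le {φ φ' : ℝ → ℝ} {φ'' K L : ℝ} {x : EuclideanSpace ℝ (Fin d)}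
    (hφ : ContDiff ℝ 2 φ) (hφ' : ∀ r, HasDerivAt φ (φ' r) r) (hφ'' : HasDerivAt φ' φ'' (V x))
    (hφ_mem : φ (V x) ∈ Set.Icc 0 K) (hφ'_mem : φ' (V x) ∈ Set.Icc 0 1) (hφ''_nonpos : φ'' ≤ 0)
    (hV : ContDiff ℝ 2 V) (hχ : ContDiff ℝ 2 χ) (hχ_mem : χ x ∈ Set.Icc 0 1)
    (hL : 0 ≤ L) (hlapl : lapl V x ≤ L) :
    hamiltonian V (fun y => χ y * φ (V y)) x ≤
      L + cutoffError V K χ x - 1 / 2 * (χ x * (φ' (V x) * ‖gradient V x‖ ^ 2)) := by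
  obtain ⟨hu, huK⟩ := hφ_mem
  have hw : χ x * φ' (V x) ∈ Set.Icc 0 1 :=
    ⟨mul_nonneg hχ_mem.1 hφ'_mem.1, mul_le_one₀ hχ_mem.2 hφ'_mem.1 hφ'_mem.2⟩
  have hlaplV : χ x * φ' (V x) * lapl V x ≤ L :=
    (mul_le_mul_of_nonneg_left hlapl hw.1).trans (mul_le_of_le_one_left hL hw.2)
  have hconcave : χ x * φ'' * ‖gradient V x‖ ^ 2 ≤ 0 :=
    mul_nonpos_of_nonpos_of_nonneg (mul_nonpos_of_nonneg_of_nonpos hχ_mem.1 hφ''_nonpos)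
      (sq_nonneg _)
  have hcoeff : |2 * φ' (V x) - φ (V x) * (1 - χ x * φ' (V x))| ≤ 2 + K := by
    have hle := mul_le_of_le_one_right hu (sub_le_self 1 hw.1)
    have hnonneg := mul_nonneg hu (sub_nonneg.mpr hw.2)
    rw [abs_le]
    constructor <;> linarith [hφ'_mem.1, hφ'_mem.2]
  have hcross : (2 * φ' (V x) - φ (V x) * (1 - χ x * φ' (V x))) *
      ⟪gradient V x, gradient χ x⟫ ≤ (2 + K) * (‖gradient V x‖ * ‖gradient χ x‖) := by
    refine (le_abs_self _).trans ?_
    rw [abs_mul]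
    exact mul_le_mul hcoeff (abs_real_inner_le_norm _ _) (abs_nonneg _)
      ((abs_nonneg _).trans hcoeff)
  have hlaplχ : φ (V x) * lapl χ x ≤ K * |lapl χ x| :=
    (mul_le_mul_of_nonneg_left (le_abs_self _) hu).trans
      (mul_le_mul_of_nonneg_right huK (abs_nonneg _))
  have hsq : 1 / 2 * φ (V x) ^ 2 * ‖gradient χ x‖ ^ 2 ≤
      1 / 2 * K ^ 2 * ‖gradient χ x‖ ^ 2 := by gcongr
  have hdissipation : χ x * φ' (V x) * (1 / 2) * ‖gradient V x‖ ^ 2 ≤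
      χ x * φ' (V x) * (1 - 1 / 2 * (χ x * φ' (V x))) * ‖gradient V x‖ ^ 2 := by
    have := hw.1
    gcongr
    linarith [hw.2]
  rw [hamiltonian_mul_comp hφ hφ' hφ'' hV hχ, cutoffError]
  linarith

theorem continuous_cutoffError (hV : ContDiff ℝ 1 V) (hχ : ContDiff ℝ 2 χ) (K : ℝ) :
    Continuous (cutoffError V K χ) := by
  have hgradV := continuous_gradient_of_contDiff hV one_ne_zero
  have hgradχ := continuous_gradient_of_contDiff hχ two_ne_zero
  have hlapl := continuous_lapl hχ
  unfold cutoffError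
  fun_prop

theorem tendsto_cutoffError_expandingBump (V : EuclideanSpace ℝ (Fin d) → ℝ) (K : ℝ)
    (x : EuclideanSpace ℝ (Fin d)) :
    Tendsto (fun n => cutoffError V K (expandingBump (EuclideanSpace ℝ (Fin d)) n) x) atTop
      (𝓝 0) := by
  refine tendsto_nhds_of_eventually_eq ?_
  filter_upwards [eventually_expandingBump_eventuallyEq_one x] with n hn
  simp [cutoffError, lapl_eq_zero_of_eventuallyEq_const hn,
    gradient_eq_zero_of_eventuallyEq_const hn]

theorem norm_cutoffError_le {C K A B : ℝ} {x : EuclideanSpace ℝ (Fin d)} (hχ : ContDiff ℝ 2 χ)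
    (hgrowth : ∀ x, ‖gradient V x‖ ≤ C * (1 + ‖x‖)) (hK : 0 ≤ K)
    (hA : (1 + ‖x‖) * ‖fderiv ℝ χ x‖ ≤ A) (hB : ‖fderiv ℝ (fderiv ℝ χ) x‖ ≤ B) :
    ‖cutoffError V K χ x‖ ≤ (2 + K) * (C * A) + K * (d * B) + 1 / 2 * K ^ 2 * A ^ 2 := by
  have hC : 0 ≤ C := by simpa using (norm_nonneg _).trans (hgrowth 0)
  rw [← norm_gradient] at hA
  have hgrad : ‖gradient χ x‖ ≤ A :=
    (le_mul_of_one_le_left (norm_nonneg _) (by simp)).trans hA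
  have hprod : ‖gradient V x‖ * ‖gradient χ x‖ ≤ C * A := by
    grw [hgrowth x, mul_assoc, hA]
  have hlapl : |lapl χ x| ≤ d * B := by grw [abs_lapl_le hχ, hB]
  rw [Real.norm_of_nonneg (by unfold cutoffError; positivity), cutoffError]
  gcongr

theorem exists_norm_cutoffError_expandingBump_le {C : ℝ}
    (hgrowth : ∀ x, ‖gradient V x‖ ≤ C * (1 + ‖x‖)) {K : ℝ} (hK : 0 ≤ K) :
    ∃ M, ∀ n x, ‖cutoffError V K (expandingBump (EuclideanSpace ℝ (Fin d)) n) x‖ ≤ M :=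
  let ⟨_, hA⟩ := exists_one_add_norm_mul_norm_fderiv_expandingBump_le _
  let ⟨_, hB⟩ := exists_norm_fderiv_fderiv_expandingBump_le _
  ⟨_, fun n x => norm_cutoffError_le (ContDiffBump.contDiff _) hgrowth hK (hA n x) (hB n x)⟩

end LocalizedHamiltonian

section EnergyEstimate

variable {d : ℕ} {V : EuclideanSpace ℝ (Fin d) → ℝ} {ρ : ℝ → Measure (EuclideanSpace ℝ (Fin d))}
  {s J L C ε : ℝ}

/-- Nonnegative potentials with Laplacian at most `L` whose gradient has at most linear growth with
constant `C`; the function itself then grows at most quadratically. -/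
structure IsSubquadraticPotential (V : EuclideanSpace ℝ (Fin d) → ℝ) (L C : ℝ) : Prop where
  contDiff : ContDiff ℝ 2 V
  nonneg : ∀ x, 0 ≤ V x
  lapl_le : ∀ x, lapl V x ≤ L
  norm_gradient_le : ∀ x, ‖gradient V x‖ ≤ C * (1 + ‖x‖)

/-- The test function to which the action bound is applied: the potential, truncated in its values
by `expTrunc ε` and in space by the `n`-th cutoff function. -/
noncomputable def truncatedPotential (V : EuclideanSpace ℝ (Fin d) → ℝ) (ε : ℝ) (n : ℕ)
    (x : EuclideanSpace ℝ (Fin d)) : ℝ :=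
  expandingBump (EuclideanSpace ℝ (Fin d)) n x * expTrunc ε (V x)

theorem contDiff_truncatedPotential (hV : ContDiff ℝ 2 V) (ε : ℝ) (n : ℕ) :
    ContDiff ℝ 2 (truncatedPotential V ε n) :=
  (ContDiffBump.contDiff _).mul (contDiff_expTrunc.comp hV)

theorem hasCompactSupport_truncatedPotential (V : EuclideanSpace ℝ (Fin d) → ℝ) (ε : ℝ) (n : ℕ) :
    HasCompactSupport (truncatedPotential V ε n) :=
  (expandingBump _ n).hasCompactSupport.mul_right

theorem tendsto_truncatedPotential (V : EuclideanSpace ℝ (Fin d) → ℝ) (ε : ℝ)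
    (x : EuclideanSpace ℝ (Fin d)) :
    Tendsto (fun n => truncatedPotential V ε n x) atTop (𝓝 (expTrunc ε (V x))) := by
  simpa only [truncatedPotential, one_mul] using
    (tendsto_expandingBump x).mul_const (expTrunc ε (V x))

theorem norm_expTrunc_le (hε : 0 < ε) {r : ℝ} (hr : 0 ≤ r) : ‖expTrunc ε r‖ ≤ 1 / ε :=
  (Real.norm_of_nonneg (expTrunc_nonneg hε hr)).trans_le (expTrunc_le_one_div hε r)

theorem norm_truncatedPotential_le (hε : 0 < ε) {x : EuclideanSpace ℝ (Fin d)} (hx : 0 ≤ V x)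
    (n : ℕ) : ‖truncatedPotential V ε n x‖ ≤ 1 / ε := by
  rw [truncatedPotential, norm_mul, Real.norm_of_nonneg (ContDiffBump.nonneg _)]
  exact (mul_le_of_le_one_left (norm_nonneg _) (ContDiffBump.le_one _)).trans
    (norm_expTrunc_le hε hx)

/-- The dissipation `‖∇V‖²`, multiplied by the slope of `expTrunc ε` at `V` and by the `N`-th cutoff
function. -/
noncomputable def truncatedDissipation (V : EuclideanSpace ℝ (Fin d) → ℝ) (ε : ℝ) (N : ℕ)
    (x : EuclideanSpace ℝ (Fin d)) : ℝ :=
  expandingBump (EuclideanSpace ℝ (Fin d)) N x * (Real.exp (-(ε * V x)) * ‖gradient V x‖ ^ 2)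

theorem truncatedDissipation_nonneg (V : EuclideanSpace ℝ (Fin d) → ℝ) (ε : ℝ) (N : ℕ)
    (x : EuclideanSpace ℝ (Fin d)) : 0 ≤ truncatedDissipation V ε N x :=
  mul_nonneg (ContDiffBump.nonneg _) (by positivity)

theorem continuous_truncatedDissipation (hV : ContDiff ℝ 1 V) (ε : ℝ) (N : ℕ) :
    Continuous (truncatedDissipation V ε N) := by
  have hgrad := continuous_gradient_of_contDiff hV one_ne_zero
  have hcont := hV.continuous
  have hbump := (expandingBump (EuclideanSpace ℝ (Fin d)) N).continuous
  unfold truncatedDissipation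
  fun_prop

theorem exists_norm_truncatedDissipation_le (hV : ContDiff ℝ 1 V) (ε : ℝ) (N : ℕ) :
    ∃ M, ∀ x, ‖truncatedDissipation V ε N x‖ ≤ M :=
  (continuous_truncatedDissipation hV ε N).bounded_above_of_compact_support
    (expandingBump _ N).hasCompactSupport.mul_right

theorem tendsto_truncatedDissipation (V : EuclideanSpace ℝ (Fin d) → ℝ) {ε : ℕ → ℝ}
    (hε : Tendsto ε atTop (𝓝 0)) (x : EuclideanSpace ℝ (Fin d)) :
    Tendsto (fun n => truncatedDissipation V (ε n) n x) atTop (𝓝 (‖gradient V x‖ ^ 2)) := by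
  simpa only [truncatedDissipation, Function.comp_apply, one_mul] using
    (tendsto_expandingBump x).mul
      (((tendsto_exp_neg_mul_nhds_zero (V x)).comp hε).mul_const (‖gradient V x‖ ^ 2))

theorem hamiltonian_truncatedPotential_le (hV : IsSubquadraticPotential V L C) (hL : 0 ≤ L)
    (hε : 0 < ε) {N n : ℕ} (hNn : 2 * N < n) (x : EuclideanSpace ℝ (Fin d)) :
    hamiltonian V (truncatedPotential V ε n) x ≤
      L + cutoffError V (1 / ε) (expandingBump (EuclideanSpace ℝ (Fin d)) n) x -
        1 / 2 * truncatedDissipation V ε N x := by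
  have hslope : Real.exp (-(ε * V x)) ≤ 1 :=
    Real.exp_le_one_iff.mpr (neg_nonpos.mpr (mul_nonneg hε.le (hV.nonneg x)))
  refine (hamiltonian_mul_comp_le contDiff_expTrunc (hasDerivAt_expTrunc hε.ne')
    (hasDerivAt_exp_neg_mul ε _) ⟨expTrunc_nonneg hε (hV.nonneg x), expTrunc_le_one_div hε _⟩
    ⟨Real.exp_nonneg _, hslope⟩ (neg_nonpos.mpr (by positivity)) hV.contDiff
    (ContDiffBump.contDiff _) ⟨ContDiffBump.nonneg _, ContDiffBump.le_one _⟩ hL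
    (hV.lapl_le x)).trans ?_
  rw [truncatedDissipation]
  gcongr
  exact expandingBump_le_of_two_mul_lt hNn x

theorem integral_integral_hamiltonian_truncatedPotential_le (hs : 0 ≤ s)
    (hρ : IsNarrowCurve ρ (Set.Icc 0 s)) (hV : IsSubquadraticPotential V L C) (hL : 0 ≤ L)
    (hε : 0 < ε) {N n : ℕ} (hNn : 2 * N < n) :
    ∫ t in 0..s, ∫ x, hamiltonian V (truncatedPotential V ε n) x ∂(ρ t) ≤
      (∫ t in 0..s, ∫ x,
        (L + cutoffError V (1 / ε) (expandingBump (EuclideanSpace ℝ (Fin d)) n) x) ∂(ρ t)) -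
      ∫ t in 0..s, ∫ x, 1 / 2 * truncatedDissipation V ε N x ∂(ρ t) := by
  have hV1 : ContDiff ℝ 1 V := hV.contDiff.of_le one_le_two
  have hp := contDiff_truncatedPotential hV.contDiff ε n
  have herr : Continuous fun x =>
      L + cutoffError V (1 / ε) (expandingBump (EuclideanSpace ℝ (Fin d)) n) x :=
    continuous_const.add (continuous_cutoffError hV1 (ContDiffBump.contDiff _) _)
  have hdiss : Continuous fun x => 1 / 2 * truncatedDissipation V ε N x :=
    (continuous_truncatedDissipation hV1 ε N).const_mul _
  obtain ⟨M, hM⟩ := exists_norm_cutoffError_expandingBump_le hV.norm_gradient_le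
    (by positivity : 0 ≤ 1 / ε)
  obtain ⟨D, hD⟩ := exists_norm_truncatedDissipation_le hV1 ε N
  have herrb x := norm_add_le_of_le (le_refl ‖L‖) (hM n x)
  have hdissb x := norm_mul_le_of_le (le_refl ‖(1 / 2 : ℝ)‖) (hD x)
  rw [← hρ.integral_integral_sub hs herr ⟨_, herrb⟩ hdiss ⟨_, hdissb⟩]
  exact hρ.integral_integral_mono hs (continuous_hamiltonian hV1 hp)
    (exists_norm_hamiltonian_le hV1 hp (hasCompactSupport_truncatedPotential V ε n))
    (herr.sub hdiss) ⟨_, fun x => norm_sub_le_of_le (herrb x) (hdissb x)⟩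
    (hamiltonian_truncatedPotential_le hV hL hε hNn)

theorem tendsto_integral_integral_add_cutoffError (hs : 0 ≤ s)
    (hρ : IsNarrowCurve ρ (Set.Icc 0 s)) (hV : IsSubquadraticPotential V L C) {K : ℝ}
    (hK : 0 ≤ K) :
    Tendsto (fun n => ∫ t in 0..s, ∫ x,
      (L + cutoffError V K (expandingBump (EuclideanSpace ℝ (Fin d)) n) x) ∂(ρ t)) atTop
      (𝓝 (s * L)) := by
  obtain ⟨M, hM⟩ := exists_norm_cutoffError_expandingBump_le hV.norm_gradient_le hK
  have hlim := hρ.tendsto_integral_integral hs (fun n => continuous_const.add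
    (continuous_cutoffError (hV.contDiff.of_le one_le_two) (ContDiffBump.contDiff _) K))
    (fun n x => norm_add_le_of_le (le_refl ‖L‖) (hM n x))
    fun x => (tendsto_cutoffError_expandingBump V K x).const_add L
  simpa only [Pi.add_apply, add_zero, sub_zero, hρ.integral_integral_const hs] using hlim

theorem integral_expTrunc_add_le (hs : 0 ≤ s) (hρ : IsNarrowCurve ρ (Set.Icc 0 s))
    (hV : IsSubquadraticPotential V L C) (hL : 0 ≤ L)
    (hJ : ∀ p, ContDiff ℝ (⊤ : ℕ∞) p → HasCompactSupport p → testAction V ρ s p ≤ J)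
    (hε : 0 < ε) (N : ℕ) :
    ∫ x, expTrunc ε (V x) ∂(ρ s) + ∫ t in 0..s, ∫ x, 1 / 2 * truncatedDissipation V ε N x ∂(ρ t) ≤
      ∫ x, expTrunc ε (V x) ∂(ρ 0) + J + s * L := by
  have hlim {t : ℝ} (ht : t ∈ Set.Icc 0 s) :
      Tendsto (fun n => ∫ x, truncatedPotential V ε n x ∂(ρ t)) atTop
        (𝓝 (∫ x, expTrunc ε (V x) ∂(ρ t))) :=
    hρ.tendsto_integral (fun n => (contDiff_truncatedPotential hV.contDiff ε n).continuous)
      (fun n x => norm_truncatedPotential_le hε (hV.nonneg x) n)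
      (tendsto_truncatedPotential V ε) ht
  have herr := tendsto_integral_integral_add_cutoffError hs hρ hV (by positivity : 0 ≤ 1 / ε)
  refine le_of_tendsto_of_tendsto ((hlim (Set.right_mem_Icc.mpr hs)).add_const _)
    (((hlim (Set.left_mem_Icc.mpr hs)).add_const J).add herr) ?_
  filter_upwards [eventually_gt_atTop (2 * N)] with n hn
  have hham := integral_integral_hamiltonian_truncatedPotential_le hs hρ hV hL hε hn
  have haction := testAction_le_of_contDiff_two hs hρ (hV.contDiff.of_le one_le_two) hJ
    (contDiff_truncatedPotential hV.contDiff ε n) (hasCompactSupport_truncatedPotential V ε n)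
  rw [testAction] at haction
  linarith

theorem integrable_expTrunc_comp (hρ : IsNarrowCurve ρ (Set.Icc 0 s)) (hV : Continuous V)
    (hV0 : ∀ x, 0 ≤ V x) (hε : 0 < ε) {t : ℝ} (ht : t ∈ Set.Icc 0 s) :
    Integrable (fun x => expTrunc ε (V x)) (ρ t) :=
  hρ.integrable ((contDiff_expTrunc (n := 0)).continuous.comp hV)
    ⟨1 / ε, fun x => norm_expTrunc_le hε (hV0 x)⟩ ht

theorem integral_expTrunc_add_le_integral (hs : 0 ≤ s) (hρ : IsNarrowCurve ρ (Set.Icc 0 s))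
    (hV : IsSubquadraticPotential V L C) (hL : 0 ≤ L) (hint : Integrable V (ρ 0))
    (hJ : ∀ p, ContDiff ℝ (⊤ : ℕ∞) p → HasCompactSupport p → testAction V ρ s p ≤ J)
    (hε : 0 < ε) (N : ℕ) :
    ∫ x, expTrunc ε (V x) ∂(ρ s) + 1 / 2 * ∫ t in 0..s, ∫ x, truncatedDissipation V ε N x ∂(ρ t) ≤
      ∫ x, V x ∂(ρ 0) + J + s * L := by
  have hinitial : ∫ x, expTrunc ε (V x) ∂(ρ 0) ≤ ∫ x, V x ∂(ρ 0) :=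
    integral_mono (integrable_expTrunc_comp hρ hV.contDiff.continuous hV.nonneg hε
      (Set.left_mem_Icc.mpr hs)) hint fun x => expTrunc_le_self hε (V x)
  have hbound := integral_expTrunc_add_le hs hρ hV hL hJ hε N
  simp only [integral_const_mul, intervalIntegral.integral_const_mul] at hbound
  linarith

theorem lintegral_ofReal_potential_le (hs : 0 ≤ s) (hρ : IsNarrowCurve ρ (Set.Icc 0 s))
    (hV : IsSubquadraticPotential V L C) (hL : 0 ≤ L) (hint : Integrable V (ρ 0))
    (hJ : ∀ p, ContDiff ℝ (⊤ : ℕ∞) p → HasCompactSupport p → testAction V ρ s p ≤ J) :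
    ∫⁻ x, ENNReal.ofReal (V x) ∂(ρ s) ≤ ENNReal.ofReal (∫ x, V x ∂(ρ 0) + J + s * L) := by
  have hε (n : ℕ) : (0 : ℝ) < 1 / (n + 1) := by positivity
  have hε0 : Tendsto (fun n : ℕ => (1 : ℝ) / (n + 1)) atTop (𝓝[>] 0) :=
    tendsto_nhdsWithin_iff.mpr ⟨tendsto_one_div_add_atTop_nhds_zero_nat, .of_forall hε⟩
  refine lintegral_ofReal_le_of_tendsto (fun n => integrable_expTrunc_comp hρ
    hV.contDiff.continuous hV.nonneg (hε n) (Set.right_mem_Icc.mpr hs))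
    (fun n x => expTrunc_nonneg (hε n) (hV.nonneg x))
    (fun x => (tendsto_expTrunc (V x)).comp hε0) fun n => ?_
  have hbound := integral_expTrunc_add_le_integral hs hρ hV hL hint hJ (hε n) n
  have hdiss : 0 ≤ ∫ t in 0..s, ∫ x, truncatedDissipation V (1 / (n + 1)) n x ∂(ρ t) :=
    intervalIntegral.integral_nonneg hs fun t _ =>
      integral_nonneg (truncatedDissipation_nonneg V _ n)
  linarith

theorem lintegral_lintegral_ofReal_norm_gradient_sq_le (hs : 0 ≤ s)
    (hρ : IsNarrowCurve ρ (Set.Icc 0 s)) (hV : IsSubquadraticPotential V L C) (hL : 0 ≤ L)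
    (hint : Integrable V (ρ 0))
    (hJ : ∀ p, ContDiff ℝ (⊤ : ℕ∞) p → HasCompactSupport p → testAction V ρ s p ≤ J) :
    ∫⁻ t in Set.Icc 0 s, ∫⁻ x, ENNReal.ofReal (‖gradient V x‖ ^ 2) ∂(ρ t) ≤
      ENNReal.ofReal (2 * (∫ x, V x ∂(ρ 0) + J + s * L)) := by
  have hV1 : ContDiff ℝ 1 V := hV.contDiff.of_le one_le_two
  have hε (n : ℕ) : (0 : ℝ) < 1 / (n + 1) := by positivity
  refine hρ.lintegral_lintegral_ofReal_le_of_tendsto hs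
    (fun n => continuous_truncatedDissipation hV1 (1 / (n + 1)) n)
    (fun n => exists_norm_truncatedDissipation_le hV1 _ n)
    (fun n => truncatedDissipation_nonneg V _ n)
    (tendsto_truncatedDissipation V tendsto_one_div_add_atTop_nhds_zero_nat) fun n => ?_
  have hbound := integral_expTrunc_add_le_integral hs hρ hV hL hint hJ (hε n) n
  have hpot : 0 ≤ ∫ x, expTrunc (1 / (n + 1)) (V x) ∂(ρ s) :=
    integral_nonneg fun x => expTrunc_nonneg (hε n) (hV.nonneg x)
  linarith

end EnergyEstimate

theorem exists_norm_le_mul_one_add_norm {E F : Type*} [NormedAddCommGroup E] [ProperSpace E]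
    [NormedAddCommGroup F] {g : E → F} (hg : Continuous g) {C : ℝ}
    (hC : ∀ x, ‖x‖ * ‖g x‖ ≤ C * (1 + ‖x‖ ^ 2)) : ∃ C', ∀ x, ‖g x‖ ≤ C' * (1 + ‖x‖) := by
  have hC0 : 0 ≤ C := by simpa using hC 0
  obtain ⟨M, hM⟩ := (isCompact_closedBall (0 : E) 1).exists_bound_of_continuousOn hg.continuousOn
  have hM0 : 0 ≤ M := (norm_nonneg _).trans (hM 0 (by simp))
  refine ⟨M + 2 * C, fun x => ?_⟩
  rcases le_total ‖x‖ 1 with hx | hx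
  · have hMx := hM x (by simpa using hx)
    nlinarith [norm_nonneg x]
  · have hfar : ‖g x‖ ≤ 2 * C * ‖x‖ := by
      refine le_of_mul_le_mul_left ?_ (by linarith : 0 < ‖x‖)
      calc ‖x‖ * ‖g x‖ ≤ C * (1 + ‖x‖ ^ 2) := hC x
        _ ≤ C * (‖x‖ ^ 2 + ‖x‖ ^ 2) := by
          gcongr
          exact one_le_pow₀ hx
        _ = ‖x‖ * (2 * C * ‖x‖) := by ring
    nlinarith

section BoundedBelow

variable {d : ℕ} {Ψ : EuclideanSpace ℝ (Fin d) → ℝ} {C : ℝ}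

theorem isSubquadraticPotential_sub_iInf (hΨ : ContDiff ℝ 2 Ψ) (hbelow : ∃ c, ∀ x, c ≤ Ψ x)
    (hlap : ∃ Cl, ∀ x, |lapl Ψ x| ≤ Cl) (hgrad : ∀ x, ‖gradient Ψ x‖ ≤ C * (1 + ‖x‖)) :
    IsSubquadraticPotential (fun x => Ψ x - ⨅ y, Ψ y) (⨆ x, |lapl Ψ x|) C where
  contDiff := hΨ.sub contDiff_const
  nonneg x := sub_nonneg.mpr (ciInf_le (hbelow.imp fun _ => Set.forall_mem_range.mpr) x)
  lapl_le x := by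
    rw [lapl_sub_const]
    exact (le_abs_self _).trans (le_ciSup (hlap.imp fun _ => Set.forall_mem_range.mpr) x)
  norm_gradient_le := by simpa only [gradient_sub_const] using hgrad

theorem testAction_sub_const (Ψ : EuclideanSpace ℝ (Fin d) → ℝ) (c : ℝ) :
    testAction (fun x => Ψ x - c) = testAction Ψ := by
  ext ρ s p
  simp only [testAction, hamiltonian, gradient_sub_const]

theorem integral_sub_const {X : Type*} [MeasurableSpace X] {μ : Measure X}
    [IsProbabilityMeasure μ] {f : X → ℝ} (hf : Integrable f μ) (c : ℝ) :
    ∫ x, (f x - c) ∂μ = ∫ x, f x ∂μ - c := by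
  rw [integral_sub hf (integrable_const c), integral_const, probReal_univ, one_smul]

theorem lintegral_ofReal_abs_le {X : Type*} [MeasurableSpace X] {μ : Measure X}
    [IsProbabilityMeasure μ] {f : X → ℝ} {m B : ℝ} (hm : ∀ x, 0 ≤ f x - m) (hB : 0 ≤ B)
    (h : ∫⁻ x, ENNReal.ofReal (f x - m) ∂μ ≤ ENNReal.ofReal B) :
    ∫⁻ x, ENNReal.ofReal |f x| ∂μ ≤ ENNReal.ofReal (B + |m|) := by
  have habs x : |f x| ≤ (f x - m) + |m| := by
    simpa [abs_of_nonneg (hm x)] using abs_add_le (f x - m) m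
  calc ∫⁻ x, ENNReal.ofReal |f x| ∂μ
      ≤ ∫⁻ x, (ENNReal.ofReal (f x - m) + ENNReal.ofReal |m|) ∂μ := lintegral_mono fun x =>
        (ENNReal.ofReal_le_ofReal (habs x)).trans ENNReal.ofReal_add_le
    _ = ∫⁻ x, ENNReal.ofReal (f x - m) ∂μ + ENNReal.ofReal |m| := by
      rw [lintegral_add_right _ measurable_const, lintegral_const, measure_univ, mul_one]
    _ ≤ ENNReal.ofReal (B + |m|) := by
      rw [ENNReal.ofReal_add hB (abs_nonneg m)]
      gcongr

theorem iSup_lintegral_ofReal_abs_le {ρ : ℝ → Measure (EuclideanSpace ℝ (Fin d))}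
    {δ m L J : ℝ} (hρ : IsNarrowCurve ρ (Set.Icc 0 δ))
    (hV : IsSubquadraticPotential (fun x => Ψ x - m) L C) (hL : 0 ≤ L) (hJ0 : 0 ≤ J)
    (hint : Integrable (fun x => Ψ x - m) (ρ 0))
    (hJ : ∀ s ∈ Set.Icc 0 δ, ∀ p, ContDiff ℝ (⊤ : ℕ∞) p → HasCompactSupport p →
      testAction Ψ ρ s p ≤ J) :
    ⨆ t ∈ Set.Icc 0 δ, ∫⁻ x, ENNReal.ofReal |Ψ x| ∂(ρ t) ≤
      ENNReal.ofReal (∫ x, (Ψ x - m) ∂(ρ 0) + J + δ * L + |m|) := by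
  refine iSup₂_le fun s hs => ?_
  have := hρ.isProbabilityMeasure s hs
  have hinit : 0 ≤ ∫ x, (Ψ x - m) ∂(ρ 0) := integral_nonneg hV.nonneg
  have hδ : 0 ≤ δ := hs.1.trans hs.2
  refine lintegral_ofReal_abs_le hV.nonneg (by positivity) ?_
  refine (lintegral_ofReal_potential_le hs.1 (hρ.mono (Set.Icc_subset_Icc_right hs.2)) hV hL hint
    (testAction_sub_const Ψ m ▸ hJ s hs)).trans (ENNReal.ofReal_le_ofReal ?_)
  gcongr
  exact hs.2

end BoundedBelow

theorem ofReal_mul_add_ofReal_mul_le {a b x y c : ℝ} {S G : ENNReal} (ha : 0 ≤ a) (hb : 0 ≤ b)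
    (hx : 0 ≤ x) (hy : 0 ≤ y) (hS : S ≤ ENNReal.ofReal x) (hG : G ≤ ENNReal.ofReal y)
    (hc : a * x + b * y ≤ c) :
    ENNReal.ofReal a * S + ENNReal.ofReal b * G ≤ ENNReal.ofReal c :=
  calc ENNReal.ofReal a * S + ENNReal.ofReal b * G
      ≤ ENNReal.ofReal a * ENNReal.ofReal x + ENNReal.ofReal b * ENNReal.ofReal y := by gcongr
    _ = ENNReal.ofReal (a * x + b * y) := by
      rw [← ENNReal.ofReal_mul ha, ← ENNReal.ofReal_mul hb, ENNReal.ofReal_add] <;> positivity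
    _ ≤ ENNReal.ofReal c := ENNReal.ofReal_le_ofReal hc

theorem three_div_four_mul_exp_one_sub_pos : 0 < 3 / (4 * Real.exp 1) - 1 / 4 := by
  rw [sub_pos, div_lt_div_iff₀ (by norm_num) (by positivity)]
  linarith [Real.exp_one_lt_three]

theorem weighted_energy_le {A J L C m δ : ℝ} (hA : 0 ≤ A - m) (hJ : 0 ≤ J) (hL : 0 ≤ L)
    (hC : 0 ≤ C) (hδ : 0 ≤ δ) :
    (1 / Real.exp 1 - 5 * δ * C) * (A - m + J + δ * L + |m|) +
        (3 / (4 * Real.exp 1) - 1 / 4) * (2 * (A - m + J + δ * L)) ≤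
      2 * J + 8 / Real.exp 1 * |m| + 2 / Real.exp 1 * A + 2 * δ + 2 * δ / Real.exp 1 * L := by
  set q := 1 / Real.exp 1 with hq
  have : 0 ≤ q := by positivity
  have hq1 : q ≤ 1 := (div_le_one (by positivity)).mpr (Real.one_le_exp zero_le_one)
  have hβ : 3 / (4 * Real.exp 1) - 1 / 4 ≤ q / 2 := by
    have : 3 / (4 * Real.exp 1) = 3 / 4 * q := by rw [hq]; ring
    linarith
  calc (q - 5 * δ * C) * (A - m + J + δ * L + |m|) +
        (3 / (4 * Real.exp 1) - 1 / 4) * (2 * (A - m + J + δ * L))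
      ≤ q * (A - m + J + δ * L + |m|) + q / 2 * (2 * (A - m + J + δ * L)) := by
        gcongr
        exact sub_le_self q (by positivity)
    _ = q * (2 * J) + q * (2 * (-m) + |m|) + 2 * q * A + 2 * δ * q * L := by ring
    _ ≤ 1 * (2 * J) + q * (8 * |m|) + 2 * q * A + (2 * δ + 2 * δ * q * L) := by
        gcongr
        · linarith [neg_le_abs m, abs_nonneg m]
        · linarith
    _ = _ := by rw [hq]; ring

theorem quantitative_absPsi_gradPsi_bound_general {d : ℕ} {Ψ : EuclideanSpace ℝ (Fin d) → ℝ}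
    (hΨ : ContDiff ℝ 2 Ψ) (hbelow : ∃ c : ℝ, ∀ x, c ≤ Ψ x) (hlap : ∃ Cl : ℝ, ∀ x, |lapl Ψ x| ≤ Cl)
    {C : ℝ} (hgrowth : ∀ x, ‖x‖ * ‖gradient Ψ x‖ ≤ C * (1 + ‖x‖ ^ 2))
    {ρ : ℝ → Measure (EuclideanSpace ℝ (Fin d))} (hρ : IsNarrowCurve ρ (Set.Icc 0 1))
    (hΨint : Integrable Ψ (ρ 0)) {J : ℝ}
    (hJ : ∀ p : EuclideanSpace ℝ (Fin d) → ℝ, ContDiff ℝ (⊤ : ℕ∞) p → HasCompactSupport p →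
      ∀ s ∈ Set.Icc (0 : ℝ) 1,
        (∫ x, p x ∂(ρ s)) - (∫ x, p x ∂(ρ 0))
          - (∫ t in (0 : ℝ)..s, (∫ x, lapl p x ∂(ρ t)))
          + (∫ t in (0 : ℝ)..s, (∫ x, ⟪gradient Ψ x, gradient p x⟫ ∂(ρ t)))
          - (1 / 2) * (∫ t in (0 : ℝ)..s, (∫ x, ‖gradient p x‖ ^ 2 ∂(ρ t))) ≤ J) :
    0 < 3 / (4 * Real.exp 1) - 1 / 4 ∧
    ∀ δ ∈ Set.Ioc (0 : ℝ) 1, 0 < 1 / Real.exp 1 - 5 * δ * C →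
      ENNReal.ofReal (1 / Real.exp 1 - 5 * δ * C) *
          (⨆ t ∈ Set.Icc (0 : ℝ) δ, ∫⁻ x, ENNReal.ofReal |Ψ x| ∂(ρ t))
        + ENNReal.ofReal (3 / (4 * Real.exp 1) - 1 / 4) *
          (∫⁻ t in Set.Icc (0 : ℝ) δ, ∫⁻ x, ENNReal.ofReal (‖gradient Ψ x‖ ^ 2) ∂(ρ t))
      ≤ ENNReal.ofReal (2 * J + (8 / Real.exp 1) * |⨅ x, Ψ x|
          + (2 / Real.exp 1) * (∫ x, Ψ x ∂(ρ 0)) + 2 * δ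
          + (2 * δ / Real.exp 1) * (⨆ x, |lapl Ψ x|)) := by
  refine ⟨three_div_four_mul_exp_one_sub_pos, fun δ ⟨hδ0, hδ1⟩ hα => ?_⟩
  obtain ⟨C', hC'⟩ := exists_norm_le_mul_one_add_norm
    (continuous_gradient_of_contDiff hΨ two_ne_zero) hgrowth
  have hV := isSubquadraticPotential_sub_iInf hΨ hbelow hlap hC'
  have hρδ : IsNarrowCurve ρ (Set.Icc 0 δ) := hρ.mono (Set.Icc_subset_Icc_right hδ1)
  have hL : 0 ≤ ⨆ x, |lapl Ψ x| := Real.iSup_nonneg fun _ => abs_nonneg _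
  have hC : 0 ≤ C := by simpa using hgrowth 0
  have hJ0 : 0 ≤ J := by
    simpa using hJ (fun _ => 0) contDiff_const .zero 0 (Set.left_mem_Icc.mpr zero_le_one)
  have haction : ∀ s ∈ Set.Icc 0 δ, ∀ p, ContDiff ℝ (⊤ : ℕ∞) p → HasCompactSupport p →
      testAction Ψ ρ s p ≤ J := fun s hs p hp hpc =>
    (testAction_eq hs.1 (hρδ.mono (Set.Icc_subset_Icc_right hs.2)) (hΨ.of_le one_le_two)
      (contDiff_infty.mp hp 2) hpc).trans_le (hJ p hp hpc s ⟨hs.1, hs.2.trans hδ1⟩)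
  have := hρ.isProbabilityMeasure 0 (Set.left_mem_Icc.mpr zero_le_one)
  have hint : Integrable (fun x => Ψ x - ⨅ y, Ψ y) (ρ 0) := hΨint.sub (integrable_const _)
  have hinit : 0 ≤ ∫ x, (Ψ x - ⨅ y, Ψ y) ∂(ρ 0) := integral_nonneg hV.nonneg
  have hsup := iSup_lintegral_ofReal_abs_le hρδ hV hL hJ0 hint haction
  have hgrad := lintegral_lintegral_ofReal_norm_gradient_sq_le hδ0.le hρδ hV hL hint
    (by simpa only [testAction_sub_const] using haction δ (Set.right_mem_Icc.mpr hδ0.le))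
  simp only [gradient_sub_const, integral_sub_const hΨint] at hinit hsup hgrad
  exact ofReal_mul_add_ofReal_mul_le hα.le three_div_four_mul_exp_one_sub_pos.le (by positivity)
    (by positivity) hsup hgrad (weighted_energy_le hinit hJ0 hL hC hδ0.le)

/-- Under the hypotheses of Statement 3 (subquadratic convex `Ψ`,
narrowly continuous curve of probability measures, weak rate-functional bound `J`),
for every `δ ∈ (0,1]` with `α := 1/e - 5δC > 0` and with `β := 3/(4e) - 1/4 > 0`,
`α · sup_{t∈[0,δ]} ∫|Ψ| dρ_t + β · ∫_0^δ ∫|∇Ψ|² dρ_t dt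
  ≤ 2J + (8/e)|inf Ψ| + (2/e) ∫Ψ dρ_0 + 2δ + (2δ/e)‖ΔΨ‖_∞`. -/
theorem quantitative_absPsi_gradPsi_bound (d : ℕ) (Ψ : EuclideanSpace ℝ (Fin d) → ℝ)
    (hΨ : ContDiff ℝ 2 Ψ)
    (hconv : ConvexOn ℝ Set.univ Ψ)
    (hbelow : ∃ c : ℝ, ∀ x, c ≤ Ψ x)
    (hlap : ∃ Cl : ℝ, ∀ x, |lapl Ψ x| ≤ Cl)
    (C : ℝ) (hC : 0 < C) (hgrowth : ∀ x, ‖x‖ * ‖gradient Ψ x‖ ≤ C * (1 + ‖x‖ ^ 2))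
    (ρ : ℝ → Measure (EuclideanSpace ℝ (Fin d)))
    (hprob : ∀ t ∈ Set.Icc (0 : ℝ) 1, IsProbabilityMeasure (ρ t))
    (hnarrow : ∀ φ : BoundedContinuousFunction (EuclideanSpace ℝ (Fin d)) ℝ,
      ContinuousOn (fun t => ∫ x, φ x ∂(ρ t)) (Set.Icc (0 : ℝ) 1))
    (hΨint : Integrable Ψ (ρ 0))
    (J : ℝ)
    (hJ : ∀ p : EuclideanSpace ℝ (Fin d) → ℝ, ContDiff ℝ (⊤ : ℕ∞) p → HasCompactSupport p →
      ∀ s ∈ Set.Icc (0 : ℝ) 1,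
        (∫ x, p x ∂(ρ s)) - (∫ x, p x ∂(ρ 0))
          - (∫ t in (0 : ℝ)..s, (∫ x, lapl p x ∂(ρ t)))
          + (∫ t in (0 : ℝ)..s, (∫ x, ⟪gradient Ψ x, gradient p x⟫ ∂(ρ t)))
          - (1 / 2) * (∫ t in (0 : ℝ)..s, (∫ x, ‖gradient p x‖ ^ 2 ∂(ρ t))) ≤ J) :
    0 < 3 / (4 * Real.exp 1) - 1 / 4 ∧
    ∀ δ ∈ Set.Ioc (0 : ℝ) 1, 0 < 1 / Real.exp 1 - 5 * δ * C →
      ENNReal.ofReal (1 / Real.exp 1 - 5 * δ * C) *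
          (⨆ t ∈ Set.Icc (0 : ℝ) δ, ∫⁻ x, ENNReal.ofReal |Ψ x| ∂(ρ t))
        + ENNReal.ofReal (3 / (4 * Real.exp 1) - 1 / 4) *
          (∫⁻ t in Set.Icc (0 : ℝ) δ, ∫⁻ x, ENNReal.ofReal (‖gradient Ψ x‖ ^ 2) ∂(ρ t))
      ≤ ENNReal.ofReal (2 * J + (8 / Real.exp 1) * |⨅ x, Ψ x|
          + (2 / Real.exp 1) * (∫ x, Ψ x ∂(ρ 0)) + 2 * δ
          + (2 * δ / Real.exp 1) * (⨆ x, |lapl Ψ x|)) :=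
  quantitative_absPsi_gradPsi_bound_general hΨ hbelow hlap hgrowth ⟨hprob, hnarrow⟩ hΨint hJ
end

section
/- Let ρ_0 and ρ_1 be strictly positive, continuously differentiable probability densities on ℝ with finite Fisher informations I(ρ_0) and I(ρ_1), and let T ∈ C²(ℝ) satisfy T' > 0, T(x) = x for all |x| > M (for some M > 0), and the Monge–Ampère relation ρ_0(x) = ρ_1(T(x)) T'(x) for all x. For t ∈ [0,1] set T_t(x) = t x + (1−t) T(x) and ρ_t(x) = ρ_1(T_t(x)) T_t'(x). Then each ρ_t is a probability density and there exists a constant C, independent of t, such that for all t ∈ [0,1] the Fisher information of ρ_t satisfies ∫_ℝ (ρ_t'(x))²/ρ_t(x) dx ≤ C ( I(ρ_0) + I(ρ_1) ). In particular sup_{t∈[0,1]} I(ρ_t) < ∞. -/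
open MeasureTheory

/-! Let `S` be increasing with `m ≤ S' ≤ K` and `|S''| ≤ L`. The score (logarithmic derivative) of
`(ρ ∘ S) · S'` is `(ρ' / ρ) ∘ S · S' + S'' / S'`; squaring it and changing variables by `S` gives
`I((ρ ∘ S) · S') ≤ 2 K² I(ρ) + 2 (L / m)² ∫ ρ`. The maps `T_t = t · id + (1 - t) T` satisfy such
bounds uniformly in `t`, and the additive term is absorbed into a multiple of `I(ρ₁)`, which is
positive because no nonzero constant is integrable on `ℝ`. -/

section Displacement

open Filter Set
open scoped ENNReal

/-- The Fisher information `∫ (ρ')² / ρ` of a density on `ℝ`. Division is the real one, so points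
where `ρ` vanishes contribute `0`. -/
noncomputable def fisherInformation (ρ : ℝ → ℝ) : ℝ≥0∞ :=
  ∫⁻ x, ENNReal.ofReal ((deriv ρ x) ^ 2 / ρ x)

/-- The density of the pullback under an increasing map `S` of the measure with density `ρ`, so that
`ρ₀ = pullbackDensity ρ₁ T` is the Monge–Ampère relation. -/
noncomputable def pullbackDensity (ρ S : ℝ → ℝ) (x : ℝ) : ℝ :=
  ρ (S x) * deriv S x

/-- McCann's interpolation `T_t = t · id + (1 - t) T`, running from `T` at `t = 0` to the identity
at `t = 1`. -/
def displacementMap (T : ℝ → ℝ) (t x : ℝ) : ℝ :=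
  t * x + (1 - t) * T x

/-- Uniform control `0 < m ≤ S' ≤ K` and `|S''| ≤ L` of a twice differentiable map `S : ℝ → ℝ`. -/
structure HasDerivBounds (S : ℝ → ℝ) (m K L : ℝ) : Prop where
  differentiable : Differentiable ℝ S
  differentiable_deriv : Differentiable ℝ (deriv S)
  pos : 0 < m
  le_deriv : ∀ x, m ≤ deriv S x
  deriv_le : ∀ x, deriv S x ≤ K
  abs_deriv_deriv_le : ∀ x, |deriv (deriv S) x| ≤ L

variable {ρ S T : ℝ → ℝ} {m K L t : ℝ}

lemma surjective_of_le_deriv (hS : Differentiable ℝ S) (hm : 0 < m) (h : ∀ x, m ≤ deriv S x) :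
    Function.Surjective S := by
  refine hS.continuous.surjective ?_ ?_
  · refine tendsto_atTop_mono' _ ?_
      (tendsto_atTop_add_const_right _ (S 0) (tendsto_id.const_mul_atTop hm))
    filter_upwards [eventually_ge_atTop 0] with x hx
    have := mul_sub_le_image_sub_of_le_deriv hS h hx
    simp only [id]
    linarith
  · refine tendsto_atBot_mono' _ ?_
      (tendsto_atBot_add_const_right _ (S 0) (tendsto_id.const_mul_atBot hm))
    filter_upwards [eventually_le_atBot 0] with x hx
    have := mul_sub_le_image_sub_of_le_deriv hS h hx
    simp only [id]
    linarith

lemma lintegral_deriv_mul_comp (hS : Differentiable ℝ S) (hmono : Monotone S)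
    (hsurj : Function.Surjective S) (g : ℝ → ℝ≥0∞) :
    ∫⁻ x, ENNReal.ofReal (deriv S x) * g (S x) = ∫⁻ y, g y := by
  have h := lintegral_image_eq_lintegral_deriv_mul_of_monotoneOn MeasurableSet.univ
    (fun x _ ↦ (hS x).hasDerivAt.hasDerivWithinAt) (hmono.monotoneOn univ) g
  simpa [hsurj.range_eq] using h.symm

lemma integrable_pullbackDensity (hS : Differentiable ℝ S) (hmono : Monotone S)
    (hsurj : Function.Surjective S) (hρ : Integrable ρ) : Integrable (pullbackDensity ρ S) := by
  have h := integrableOn_image_iff_integrableOn_deriv_smul_of_monotoneOn MeasurableSet.univ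
    (fun x _ ↦ (hS x).hasDerivAt.hasDerivWithinAt) (hmono.monotoneOn univ) ρ
  simp only [image_univ, hsurj.range_eq, integrableOn_univ, smul_eq_mul, mul_comm (deriv S _)] at h
  exact h.1 hρ

lemma integral_pullbackDensity (hS : Differentiable ℝ S) (hmono : Monotone S)
    (hsurj : Function.Surjective S) (ρ : ℝ → ℝ) : ∫ x, pullbackDensity ρ S x = ∫ y, ρ y := by
  have h := integral_image_eq_integral_deriv_smul_of_monotoneOn MeasurableSet.univ
    (fun x _ ↦ (hS x).hasDerivAt.hasDerivWithinAt) (hmono.monotoneOn univ) ρ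
  simp only [image_univ, hsurj.range_eq, Measure.restrict_univ, smul_eq_mul,
    mul_comm (deriv S _)] at h
  exact h.symm

lemma deriv_pullbackDensity {x : ℝ} (hρ : DifferentiableAt ℝ ρ (S x)) (hS : DifferentiableAt ℝ S x)
    (hS' : DifferentiableAt ℝ (deriv S) x) :
    deriv (pullbackDensity ρ S) x
      = deriv ρ (S x) * deriv S x * deriv S x + ρ (S x) * deriv (deriv S) x :=
  ((hρ.hasDerivAt.comp x hS.hasDerivAt).mul hS'.hasDerivAt).deriv

-- Stands for `r = ρ (S x)`, `d = ρ' (S x)`, `s = S' x`, `u = S'' x`.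
lemma fisher_integrand_le_of_bounds {r d s u : ℝ} (hr : 0 < r) (hm : 0 < m) (hms : m ≤ s)
    (hsK : s ≤ K) (hu : |u| ≤ L) :
    (d * s * s + r * u) ^ 2 / (r * s) ≤ s * (2 * K ^ 2 * (d ^ 2 / r) + 2 * (L / m) ^ 2 * r) := by
  have hs : 0 < s := hm.trans_le hms
  have hL : 0 ≤ L := (abs_nonneg u).trans hu
  calc (d * s * s + r * u) ^ 2 / (r * s)
      ≤ 2 * ((d * s * s) ^ 2 + (r * u) ^ 2) / (r * s) := by gcongr; exact add_sq_le
    _ = s * (2 * s ^ 2 * (d ^ 2 / r) + 2 * (|u| / s) ^ 2 * r) := by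
        rw [div_pow, sq_abs]; field_simp
    _ ≤ s * (2 * K ^ 2 * (d ^ 2 / r) + 2 * (L / m) ^ 2 * r) := by gcongr

lemma measurable_fisherInformation_integrand (hρ : Measurable ρ) :
    Measurable fun x ↦ ENNReal.ofReal ((deriv ρ x) ^ 2 / ρ x) :=
  (((measurable_deriv ρ).pow_const 2).div hρ).ennreal_ofReal

lemma fisherInformation_ne_zero (hpos : ∀ x, 0 < ρ x) (hdiff : Differentiable ℝ ρ)
    (hint : Integrable ρ) : fisherInformation ρ ≠ 0 := by
  intro h
  rw [fisherInformation, lintegral_eq_zero_iff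
    (measurable_fisherInformation_integrand hdiff.continuous.measurable)] at h
  have hderiv : deriv ρ =ᵐ[volume] 0 := by
    filter_upwards [h] with x hx
    have hsq : (deriv ρ x) ^ 2 ≤ 0 := by
      simpa using (div_le_iff₀ (hpos x)).1 (ENNReal.ofReal_eq_zero.1 hx)
    exact pow_eq_zero_iff two_ne_zero |>.1 (hsq.antisymm (sq_nonneg _))
  have hconst : ρ = fun _ ↦ ρ 0 := by
    funext x
    have hFTC : ∫ y in (0 : ℝ)..x, deriv ρ y = ρ x - ρ 0 :=
      intervalIntegral.integral_deriv_eq_sub (fun y _ ↦ hdiff y)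
        (((integrable_zero ℝ ℝ volume).congr hderiv.symm).intervalIntegrable)
    have hzero : ∫ y in (0 : ℝ)..x, deriv ρ y = 0 := by
      rw [intervalIntegral.integral_congr_ae (g := 0) (hderiv.mono fun _ hy _ ↦ hy)]
      simp
    linarith
  rw [hconst, integrable_const_iff] at hint
  rcases hint with h0 | hfin
  · exact (hpos 0).ne' h0
  · simpa using hfin.measure_univ_lt_top

namespace HasDerivBounds

lemma deriv_pos (hS : HasDerivBounds S m K L) (x : ℝ) : 0 < deriv S x :=
  hS.pos.trans_le (hS.le_deriv x)

lemma monotone (hS : HasDerivBounds S m K L) : Monotone S :=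
  (strictMono_of_deriv_pos hS.deriv_pos).monotone

lemma surjective (hS : HasDerivBounds S m K L) : Function.Surjective S :=
  surjective_of_le_deriv hS.differentiable hS.pos hS.le_deriv

protected lemma displacementMap (hT : HasDerivBounds T m K L) (ht : t ∈ Icc (0 : ℝ) 1) :
    HasDerivBounds (displacementMap T t) (min m 1) (max K 1) L := by
  obtain ⟨ht0, ht1⟩ := ht
  have ht1' : 0 ≤ 1 - t := sub_nonneg.2 ht1
  have hderiv (x : ℝ) : HasDerivAt (displacementMap T t) (t + (1 - t) * deriv T x) x := by
    have h := ((hasDerivAt_id' x).const_mul t).fun_add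
      ((hT.differentiable x).hasDerivAt.const_mul (1 - t))
    rwa [mul_one] at h
  have hderiv_eq : deriv (displacementMap T t) = fun x ↦ t + (1 - t) * deriv T x :=
    funext fun x ↦ (hderiv x).deriv
  have hderiv2 (x : ℝ) : HasDerivAt (deriv (displacementMap T t))
      ((1 - t) * deriv (deriv T) x) x := by
    rw [hderiv_eq]
    exact ((hT.differentiable_deriv x).hasDerivAt.const_mul (1 - t)).const_add t
  refine ⟨fun x ↦ (hderiv x).differentiableAt, fun x ↦ (hderiv2 x).differentiableAt,
    lt_min hT.pos one_pos, fun x ↦ ?_, fun x ↦ ?_, fun x ↦ ?_⟩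
  · rw [hderiv_eq]
    nlinarith [min_le_left m 1, min_le_right m 1, hT.le_deriv x]
  · rw [hderiv_eq]
    nlinarith [le_max_left K 1, le_max_right K 1, hT.deriv_le x]
  · rw [(hderiv2 x).deriv, abs_mul, abs_of_nonneg ht1']
    exact (mul_le_of_le_one_left (abs_nonneg _) (by linarith)).trans (hT.abs_deriv_deriv_le x)

lemma fisherInformation_pullbackDensity_le (hS : HasDerivBounds S m K L) (hpos : ∀ x, 0 < ρ x)
    (hdiff : Differentiable ℝ ρ) :
    fisherInformation (pullbackDensity ρ S) ≤
      ENNReal.ofReal (2 * K ^ 2) * fisherInformation ρ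
        + ENNReal.ofReal (2 * (L / m) ^ 2) * ∫⁻ x, ENNReal.ofReal (ρ x) := by
  have hmeas := hdiff.continuous.measurable
  have hfisher := measurable_fisherInformation_integrand hmeas
  calc fisherInformation (pullbackDensity ρ S)
      ≤ ∫⁻ x, ENNReal.ofReal (deriv S x) * ENNReal.ofReal
          (2 * K ^ 2 * ((deriv ρ (S x)) ^ 2 / ρ (S x)) + 2 * (L / m) ^ 2 * ρ (S x)) := by
        refine lintegral_mono fun x ↦ ?_
        rw [deriv_pullbackDensity (hdiff _) (hS.differentiable x) (hS.differentiable_deriv x),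
          ← ENNReal.ofReal_mul (hS.deriv_pos x).le]
        exact ENNReal.ofReal_le_ofReal (fisher_integrand_le_of_bounds (hpos _) hS.pos
          (hS.le_deriv x) (hS.deriv_le x) (hS.abs_deriv_deriv_le x))
    _ = ∫⁻ y, ENNReal.ofReal
          (2 * K ^ 2 * ((deriv ρ y) ^ 2 / ρ y) + 2 * (L / m) ^ 2 * ρ y) :=
        lintegral_deriv_mul_comp hS.differentiable hS.monotone hS.surjective
          fun y ↦ ENNReal.ofReal (2 * K ^ 2 * ((deriv ρ y) ^ 2 / ρ y) + 2 * (L / m) ^ 2 * ρ y)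
    _ = ∫⁻ y, (ENNReal.ofReal (2 * K ^ 2) * ENNReal.ofReal ((deriv ρ y) ^ 2 / ρ y)
          + ENNReal.ofReal (2 * (L / m) ^ 2) * ENNReal.ofReal (ρ y)) := by
        refine lintegral_congr fun y ↦ ?_
        have := hpos y
        rw [ENNReal.ofReal_add (by positivity) (by positivity),
          ENNReal.ofReal_mul (p := 2 * K ^ 2) (by positivity),
          ENNReal.ofReal_mul (p := 2 * (L / m) ^ 2) (by positivity)]
    _ = ENNReal.ofReal (2 * K ^ 2) * fisherInformation ρ
          + ENNReal.ofReal (2 * (L / m) ^ 2) * ∫⁻ y, ENNReal.ofReal (ρ y) := by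
        rw [lintegral_add_left (hfisher.const_mul _), lintegral_const_mul _ hfisher,
          lintegral_const_mul _ hmeas.ennreal_ofReal, fisherInformation]

end HasDerivBounds

lemma exists_hasDerivBounds_of_hasCompactSupport_sub_id (hT : ContDiff ℝ 2 T)
    (hT' : ∀ x, 0 < deriv T x) (hsupp : HasCompactSupport fun x ↦ T x - x) :
    ∃ m K L, HasDerivBounds T m K L := by
  have hdiff : Differentiable ℝ T := hT.differentiable two_ne_zero
  have hC1 : ContDiff ℝ 1 (deriv T) := ContDiff.deriv' (by rwa [one_add_one_eq_two])
  have hsupp1 : HasCompactSupport fun x ↦ deriv T x - 1 := by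
    have hderiv : deriv (fun x ↦ T x - x) = fun x ↦ deriv T x - 1 :=
      funext fun x ↦ ((hdiff x).hasDerivAt.fun_sub (hasDerivAt_id' x)).deriv
    exact hderiv ▸ hsupp.deriv
  have hsupp2 : HasCompactSupport (deriv (deriv T)) := by
    simpa only [deriv_sub_const_fun] using hsupp1.deriv
  have hsuppInv : HasCompactSupport fun x ↦ (deriv T x)⁻¹ - 1 := by
    have h := hsupp1.comp_left (g := fun y : ℝ ↦ (y + 1)⁻¹ - 1) (by simp)
    simpa only [Function.comp_def, sub_add_cancel] using h
  have hcont1 : Continuous fun x ↦ deriv T x - 1 := hC1.continuous.sub continuous_const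
  have hcontInv : Continuous fun x ↦ (deriv T x)⁻¹ - 1 :=
    (hC1.continuous.inv₀ fun x ↦ (hT' x).ne').sub continuous_const
  obtain ⟨A, hA⟩ := hcontInv.bounded_above_of_compact_support hsuppInv
  obtain ⟨B, hB⟩ := hcont1.bounded_above_of_compact_support hsupp1
  obtain ⟨L, hL⟩ := (hC1.continuous_deriv le_rfl).bounded_above_of_compact_support hsupp2
  have hA' (x : ℝ) : (deriv T x)⁻¹ ≤ 1 + A := sub_le_iff_le_add'.1 ((le_abs_self _).trans (hA x))
  have hB' (x : ℝ) : deriv T x ≤ 1 + B := sub_le_iff_le_add'.1 ((le_abs_self _).trans (hB x))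
  have hA_pos : 0 < 1 + A := (inv_pos.2 (hT' 0)).trans_le (hA' 0)
  exact ⟨(1 + A)⁻¹, 1 + B, L, hdiff, hC1.differentiable one_ne_zero, inv_pos.2 hA_pos,
    fun x ↦ inv_le_of_inv_le₀ (hT' x) (hA' x), hB', hL⟩

lemma exists_ofReal_mul_add_le_ofReal_mul {I : ℝ≥0∞} (hI : I ≠ 0) {a b : ℝ≥0∞} (ha : a ≠ ∞)
    (hb : b ≠ ∞) : ∃ C : ℝ, a * I + b ≤ ENNReal.ofReal C * I := by
  rcases eq_or_ne I ∞ with rfl | hI'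
  · exact ⟨1, by simp⟩
  · refine ⟨(a + b / I).toReal, ?_⟩
    rw [ENNReal.ofReal_toReal (ENNReal.add_ne_top.2 ⟨ha, ENNReal.div_ne_top hb hI⟩), add_mul,
      ENNReal.div_mul_cancel hI hI']

theorem fisher_along_geodesic_bound_general (hpos : ∀ x, 0 < ρ x) (hdiff : Differentiable ℝ ρ)
    (hmass : ∫ x, ρ x = 1) (hfisher : fisherInformation ρ < ⊤) (hT : HasDerivBounds T m K L) :
    (∀ t ∈ Icc (0 : ℝ) 1,
      (∀ x, 0 ≤ pullbackDensity ρ (displacementMap T t) x) ∧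
        Integrable (pullbackDensity ρ (displacementMap T t)) ∧
        ∫ x, pullbackDensity ρ (displacementMap T t) x = 1) ∧
    (∃ C : ℝ, ∀ t ∈ Icc (0 : ℝ) 1,
      fisherInformation (pullbackDensity ρ (displacementMap T t)) ≤
        ENNReal.ofReal C * fisherInformation ρ) ∧
    (⨆ t ∈ Icc (0 : ℝ) 1, fisherInformation (pullbackDensity ρ (displacementMap T t))) < ⊤ := by
  have hint : Integrable ρ := integrable_of_integral_eq_one hmass
  have hmass' : ∫⁻ x, ENNReal.ofReal (ρ x) = 1 := by
    rw [← ofReal_integral_eq_lintegral_ofReal hint (ae_of_all _ fun x ↦ (hpos x).le), hmass,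
      ENNReal.ofReal_one]
  obtain ⟨C, hC⟩ := exists_ofReal_mul_add_le_ofReal_mul (fisherInformation_ne_zero hpos hdiff hint)
    (ENNReal.ofReal_ne_top (r := 2 * max K 1 ^ 2))
    (ENNReal.ofReal_ne_top (r := 2 * (L / min m 1) ^ 2))
  have hbound (t : ℝ) (ht : t ∈ Icc (0 : ℝ) 1) :
      fisherInformation (pullbackDensity ρ (displacementMap T t)) ≤
        ENNReal.ofReal C * fisherInformation ρ := by
    have h := (hT.displacementMap ht).fisherInformation_pullbackDensity_le hpos hdiff
    rw [hmass', mul_one] at h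
    exact h.trans hC
  refine ⟨fun t ht ↦ ?_, ⟨C, hbound⟩,
    (iSup₂_le hbound).trans_lt (ENNReal.mul_lt_top ENNReal.ofReal_lt_top hfisher)⟩
  have hS := hT.displacementMap ht
  exact ⟨fun x ↦ mul_nonneg (hpos _).le (hS.deriv_pos x).le,
    integrable_pullbackDensity hS.differentiable hS.monotone hS.surjective hint,
    (integral_pullbackDensity hS.differentiable hS.monotone hS.surjective ρ).trans hmass⟩

end Displacement

/-- In the setting of Statement 9, with `T_t = t·id + (1-t)T` and
`ρ_t = (ρ₁ ∘ T_t)·T_t'` the Wasserstein geodesic from `ρ₀` to `ρ₁`, each `ρ_t` is a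
probability density and there is a constant `C`, independent of `t ∈ [0,1]`, with
`I(ρ_t) ≤ C (I(ρ₀) + I(ρ₁))`; in particular `sup_{t∈[0,1]} I(ρ_t) < ∞`. -/
theorem fisher_along_geodesic_bound (ρ0 ρ1 : ℝ → ℝ)
    (h0pos : ∀ x, 0 < ρ0 x) (h0C1 : ContDiff ℝ 1 ρ0)
    (h0int : Integrable ρ0) (h0mass : ∫ x, ρ0 x = 1)
    (h0fisher : (∫⁻ x, ENNReal.ofReal ((deriv ρ0 x) ^ 2 / ρ0 x)) < ⊤)
    (h1pos : ∀ x, 0 < ρ1 x) (h1C1 : ContDiff ℝ 1 ρ1)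
    (h1int : Integrable ρ1) (h1mass : ∫ x, ρ1 x = 1)
    (h1fisher : (∫⁻ x, ENNReal.ofReal ((deriv ρ1 x) ^ 2 / ρ1 x)) < ⊤)
    (M : ℝ) (hM : 0 < M)
    (T : ℝ → ℝ) (hT : ContDiff ℝ 2 T) (hT' : ∀ x, 0 < deriv T x)
    (hTid : ∀ x, M < |x| → T x = x)
    (hMA : ∀ x, ρ0 x = ρ1 (T x) * deriv T x)
    (ρfam : ℝ → ℝ → ℝ)
    (hρfam : ∀ t x, ρfam t x
      = ρ1 (t * x + (1 - t) * T x) * deriv (fun y => t * y + (1 - t) * T y) x) :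
    (∀ t ∈ Set.Icc (0 : ℝ) 1,
      (∀ x, 0 ≤ ρfam t x) ∧ Integrable (ρfam t) ∧ (∫ x, ρfam t x) = 1) ∧
    (∃ C : ℝ, ∀ t ∈ Set.Icc (0 : ℝ) 1,
      (∫⁻ x, ENNReal.ofReal ((deriv (ρfam t) x) ^ 2 / ρfam t x)) ≤
        ENNReal.ofReal C *
          ((∫⁻ x, ENNReal.ofReal ((deriv ρ0 x) ^ 2 / ρ0 x))
            + ∫⁻ x, ENNReal.ofReal ((deriv ρ1 x) ^ 2 / ρ1 x))) ∧
    (⨆ t ∈ Set.Icc (0 : ℝ) 1,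
      ∫⁻ x, ENNReal.ofReal ((deriv (ρfam t) x) ^ 2 / ρfam t x)) < ⊤ := by
  obtain ⟨m, K, L, hbounds⟩ := exists_hasDerivBounds_of_hasCompactSupport_sub_id hT hT' <|
    HasCompactSupport.intro (isCompact_Icc (a := -M) (b := M)) fun x hx ↦
      sub_eq_zero.2 (hTid x (not_le.1 fun h ↦ hx (abs_le.1 h)))
  obtain rfl : ρfam = fun t ↦ pullbackDensity ρ1 (displacementMap T t) := funext₂ hρfam
  obtain ⟨hdensity, ⟨C, hC⟩, hsup⟩ := fisher_along_geodesic_bound_general h1pos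
    (h1C1.differentiable one_ne_zero) h1mass h1fisher hbounds
  exact ⟨hdensity, ⟨C, fun t ht ↦ (hC t ht).trans (mul_right_mono le_add_self)⟩, hsup⟩
end
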